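/- Let m, n ≥ 1, let Λ : 𝓢(ℝ^n) → 𝓢'(ℝ^m) be a continuous linear map into the space of tempered distributions, let s ∈ (0,1), let φ be a mollifier on ℝ^m and ψ a mollifier on ℝ^n. For ε ∈ (0,1] and y ∈ ℝ^n let ψ_{ε,y} ∈ 𝓢(ℝ^n) be given by ψ_{ε,y}(v) = ψ_ε(y−v), and define H_ε : ℝ^{m+n} → ℂ by H_ε(x,y) = ∫_{ℝ^m} (Λ(ψ_{ε,y}) ∗ φ_{ε^s})(x−u) φ_ε(u) du, where (Λ(g) ∗ φ_{ε^s})(ξ) = Λ(g)(w ↦ φ_{ε^s}(ξ−w)). Then the net (H_ε)_{ε∈(0,1]} belongs to E_τ(ℝ^{m+n}), and for every f ∈ 𝓢(ℝ^n), every g ∈ 𝓢(ℝ^m) and every p ∈ ℕ: Λ(f)(g) − ∫_{ℝ^m} ( ∫_{ℝ^n} H_ε(x,y) f(y) dy ) g(x) dx = O(ε^p) as ε → 0. That is, Λ(f) and the generalized integral operator with kernel (H_ε) applied to f are equal in the generalized distribution sense; in particular x ↦ ∫ H_ε(x,y) f(y) dy converges to Λ(f) in 𝓢'(ℝ^m)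 as ε → 0. -/

import Mathlib

open MeasureTheory Filter

noncomputable def mu {E : Type*} [NormedAddCommGroup E] [NormedSpace ℝ E]
    (r : ℤ) (l : ℕ) (f : E → ℂ) : ENNReal :=
  ⨆ (x : E) (i : ℕ) (_ : i ≤ l),
    ENNReal.ofReal ((1 + ‖x‖) ^ r * ‖iteratedFDeriv ℝ i f x‖)

def IsOEps (g : ℝ → ENNReal) (h : ℝ → ℝ) : Prop :=
  ∃ C > (0:ℝ), ∃ η > (0:ℝ), ∀ ε : ℝ, 0 < ε → ε ≤ η → g ε ≤ ENNReal.ofReal (C * h ε)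

def SchwartzLike {E : Type*} [NormedAddCommGroup E] [NormedSpace ℝ E] (f : E → ℂ) : Prop :=
  ContDiff ℝ (⊤ : ℕ∞) f ∧ ∀ q l : ℕ, mu (q : ℤ) l f < ⊤

def TemperateGrowth' {E : Type*} [NormedAddCommGroup E] [NormedSpace ℝ E] (f : E → ℂ) : Prop :=
  ContDiff ℝ (⊤ : ℕ∞) f ∧ ∀ l : ℕ, ∃ q : ℕ, mu (-(q:ℤ)) l f < ⊤

def IsESNet {E : Type*} [NormedAddCommGroup E] [NormedSpace ℝ E] (f : ℝ → E → ℂ) : Prop :=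
  (∀ ε ∈ Set.Ioc (0:ℝ) 1, SchwartzLike (f ε)) ∧
  ∀ q l : ℕ, ∃ N : ℕ, IsOEps (fun ε => mu (q:ℤ) l (f ε)) (fun ε => ε ^ (-(N:ℤ)))

def IsNSNet {E : Type*} [NormedAddCommGroup E] [NormedSpace ℝ E] (f : ℝ → E → ℂ) : Prop :=
  (∀ ε ∈ Set.Ioc (0:ℝ) 1, SchwartzLike (f ε)) ∧
  ∀ q l p : ℕ, IsOEps (fun ε => mu (q:ℤ) l (f ε)) (fun ε => ε ^ p)

def IsEtauNet {E : Type*} [NormedAddCommGroup E] [NormedSpace ℝ E] (f : ℝ → E → ℂ) : Prop :=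
  (∀ ε ∈ Set.Ioc (0:ℝ) 1, TemperateGrowth' (f ε)) ∧
  ∀ l : ℕ, ∃ q N : ℕ, IsOEps (fun ε => mu (-(q:ℤ)) l (f ε)) (fun ε => ε ^ (-(N:ℤ)))

def IsNtauNet {E : Type*} [NormedAddCommGroup E] [NormedSpace ℝ E] (f : ℝ → E → ℂ) : Prop :=
  (∀ ε ∈ Set.Ioc (0:ℝ) 1, TemperateGrowth' (f ε)) ∧
  ∀ l : ℕ, ∃ q : ℕ, ∀ p : ℕ, IsOEps (fun ε => mu (-(q:ℤ)) l (f ε)) (fun ε => ε ^ p)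

noncomputable def scaled {d : ℕ} (ρ : (Fin d → ℝ) → ℂ) (t : ℝ) (x : Fin d → ℝ) : ℂ :=
  ((t ^ (-(d:ℤ)) : ℝ) : ℂ) * ρ (t⁻¹ • x)

def IsMollifier {d : ℕ} (ρ : SchwartzMap (Fin d → ℝ) ℂ) : Prop :=
  (∫ x : Fin d → ℝ, ρ x) = 1 ∧
  ∀ α : Fin d → ℕ, α ≠ 0 → (∫ x : Fin d → ℝ, (∏ j, (x j : ℂ) ^ (α j)) * ρ x) = 0

def MemLa (a : ℝ) (N : ℕ → ℝ) : Prop :=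
  (∀ l, 0 ≤ N l) ∧
  ((a = 0 ∧ Filter.Tendsto (fun l : ℕ => N l / (l:ℝ)) Filter.atTop (nhds 0)) ∨
   (0 < a ∧ Filter.limsup (fun l : ℕ => N l / (l:ℝ)) Filter.atTop < a))

def IsESLNet {E : Type*} [NormedAddCommGroup E] [NormedSpace ℝ E]
    (a : ℝ) (f : ℝ → E → ℂ) : Prop :=
  (∀ ε ∈ Set.Ioc (0:ℝ) 1, SchwartzLike (f ε)) ∧
  ∃ N : ℕ → ℝ, MemLa a N ∧
    ∀ q l : ℕ, IsOEps (fun ε => mu (q:ℤ) l (f ε)) (fun ε => ε ^ (-(N l)))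

def IsEtauLNet {E : Type*} [NormedAddCommGroup E] [NormedSpace ℝ E]
    (c : ℝ) (f : ℝ → E → ℂ) : Prop :=
  (∀ ε ∈ Set.Ioc (0:ℝ) 1, TemperateGrowth' (f ε)) ∧
  ∃ N : ℕ → ℝ, MemLa c N ∧ ∃ q : ℕ, ∀ l : ℕ,
    IsOEps (fun ε => mu (-(q:ℤ)) l (f ε)) (fun ε => ε ^ (-(N l)))

def IsESinfNet {E : Type*} [NormedAddCommGroup E] [NormedSpace ℝ E] (f : ℝ → E → ℂ) : Prop :=
  (∀ ε ∈ Set.Ioc (0:ℝ) 1, SchwartzLike (f ε)) ∧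
  ∃ N : ℕ, ∀ q l : ℕ, IsOEps (fun ε => mu (q:ℤ) l (f ε)) (fun ε => ε ^ (-(N:ℤ)))

def ModerateNetMaps (m n : ℕ)
    (L : ℝ → SchwartzMap (Fin n → ℝ) ℂ → ((Fin m → ℝ) → ℂ)) : Prop :=
  (∀ ε ∈ Set.Ioc (0:ℝ) 1, ∀ f, TemperateGrowth' (L ε f)) ∧
  ∀ l : ℕ, ∃ C : ℝ → ℝ, (∀ ε, 0 ≤ C ε) ∧
    (∃ N : ℕ, ∃ C₀ > (0:ℝ), ∃ η > (0:ℝ), ∀ ε : ℝ, 0 < ε → ε ≤ η → C ε ≤ C₀ * ε ^ (-(N:ℤ))) ∧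
    ∃ p q l' : ℕ, ∃ η > (0:ℝ), ∀ ε : ℝ, 0 < ε → ε ≤ η →
      ∀ f : SchwartzMap (Fin n → ℝ) ℂ,
        mu (-(p:ℤ)) l (L ε f) ≤ ENNReal.ofReal (C ε) * mu (q:ℤ) l' ⇑f

def NegligibleNetMaps (m n : ℕ)
    (L : ℝ → SchwartzMap (Fin n → ℝ) ℂ → ((Fin m → ℝ) → ℂ)) : Prop :=
  (∀ ε ∈ Set.Ioc (0:ℝ) 1, ∀ f, TemperateGrowth' (L ε f)) ∧
  ∀ l : ℕ, ∃ C : ℝ → ℝ, (∀ ε, 0 ≤ C ε) ∧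
    (∀ p' : ℕ, ∃ C₀ > (0:ℝ), ∃ η > (0:ℝ), ∀ ε : ℝ, 0 < ε → ε ≤ η → C ε ≤ C₀ * ε ^ p') ∧
    ∃ p q l' : ℕ, ∃ η > (0:ℝ), ∀ ε : ℝ, 0 < ε → ε ≤ η →
      ∀ f : SchwartzMap (Fin n → ℝ) ℂ,
        mu (-(p:ℤ)) l (L ε f) ≤ ENNReal.ofReal (C ε) * mu (q:ℤ) l' ⇑f

def StronglyModerateWith (m n : ℕ)
    (L : ℝ → SchwartzMap (Fin n → ℝ) ℂ → ((Fin m → ℝ) → ℂ))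
    (lam : ℕ → ℕ) (r : ℕ → ℝ) : Prop :=
  (∀ ε ∈ Set.Ioc (0:ℝ) 1, ∀ f, TemperateGrowth' (L ε f)) ∧
  (∀ l, 0 ≤ r l) ∧
  ∀ l : ℕ, ∃ C ≥ (0:ℝ), ∃ p q : ℕ, ∃ η > (0:ℝ), ∀ ε : ℝ, 0 < ε → ε ≤ η →
    ∀ f : SchwartzMap (Fin n → ℝ) ℂ,
      mu (-(p:ℤ)) l (L ε f) ≤ ENNReal.ofReal (C * ε ^ (-(r l))) * mu (q:ℤ) (lam l) ⇑f

def ContinuousIntoOM (m n : ℕ) (L : SchwartzMap (Fin n → ℝ) ℂ → ((Fin m → ℝ) → ℂ)) : Prop :=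
  ∀ l : ℕ, ∃ C ≥ (0:ℝ), ∃ p q l' : ℕ, ∀ f,
    mu (-(p:ℤ)) l (L f) ≤ ENNReal.ofReal C * mu (q:ℤ) l' ⇑f

noncomputable def muOn {d : ℕ} (Ω : Set (Fin d → ℝ)) (r : ℤ) (l : ℕ)
    (f : (Fin d → ℝ) → ℂ) : ENNReal :=
  ⨆ (x : Ω) (i : ℕ) (_ : i ≤ l),
    ENNReal.ofReal ((1 + ‖(x : Fin d → ℝ)‖) ^ r * ‖iteratedFDerivWithin ℝ i f Ω (x : Fin d → ℝ)‖)

def IsBox {d : ℕ} (Ω : Set (Fin d → ℝ)) : Prop :=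
  ∃ I : Fin d → Set ℝ, (∀ j, IsOpen (I j) ∧ Convex ℝ (I j)) ∧ Ω = Set.univ.pi I

def IsRegularSet (R : Set (ℕ → ℝ)) : Prop :=
  R.Nonempty ∧ (∀ N ∈ R, ∀ n, 0 ≤ N n) ∧
  (∀ N ∈ R, ∀ k : ℕ, ∃ N' ∈ R, ∀ n, N n + k ≤ N' n) ∧
  (∀ N₁ ∈ R, ∀ N₂ ∈ R, ∃ N ∈ R, ∀ n, max (N₁ n) (N₂ n) ≤ N n) ∧
  (∀ N₁ ∈ R, ∀ N₂ ∈ R, ∃ N ∈ R, ∀ l₁ l₂ : ℕ, N₁ l₁ + N₂ l₂ ≤ N (l₁ + l₂))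

def IsESRNet {E : Type*} [NormedAddCommGroup E] [NormedSpace ℝ E]
    (R : Set (ℕ → ℝ)) (f : ℝ → E → ℂ) : Prop :=
  (∀ ε ∈ Set.Ioc (0:ℝ) 1, SchwartzLike (f ε)) ∧
  ∃ N ∈ R, ∀ q l : ℕ, IsOEps (fun ε => mu (q:ℤ) l (f ε)) (fun ε => ε ^ (-(N l)))

def IsEtauRNet {E : Type*} [NormedAddCommGroup E] [NormedSpace ℝ E]
    (R : Set (ℕ → ℝ)) (f : ℝ → E → ℂ) : Prop :=
  (∀ ε ∈ Set.Ioc (0:ℝ) 1, TemperateGrowth' (f ε)) ∧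
  ∃ N ∈ R, ∃ q : ℕ, ∀ l : ℕ,
    IsOEps (fun ε => mu (-(q:ℤ)) l (f ε)) (fun ε => ε ^ (-(N l)))

noncomputable def pderiv' {d : ℕ} (j : Fin d) (f : (Fin d → ℝ) → ℂ) : (Fin d → ℝ) → ℂ :=
  fun x => fderiv ℝ f x (Pi.single j 1)

noncomputable def multiDeriv {d : ℕ} : List (Fin d) → ((Fin d → ℝ) → ℂ) → ((Fin d → ℝ) → ℂ)
  | [], f => f
  | j :: js, f => pderiv' j (multiDeriv js f)

section SchwartzKernel

open SchwartzMap Topology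
open scoped ContDiff LineDeriv

section Seminorms

variable {E : Type*} [NormedAddCommGroup E] [NormedSpace ℝ E]

/-- The largest of the Schwartz seminorms with weight and order at most `k`. -/
noncomputable def schwartzSup (E : Type*) [NormedAddCommGroup E] [NormedSpace ℝ E] (k : ℕ) :
    Seminorm ℂ 𝓢(E, ℂ) :=
  (Finset.Iic (k, k)).sup (schwartzSeminormFamily ℂ E ℂ)

theorem weight_mul_le_schwartzSup {k a b : ℕ} (ha : a ≤ k) (hb : b ≤ k) (h : 𝓢(E, ℂ)) (x : E) :
    (1 + ‖x‖) ^ a * ‖iteratedFDeriv ℝ b h x‖ ≤ 2 ^ k * schwartzSup E k h :=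
  one_add_le_sup_seminorm_apply (𝕜 := ℂ) (m := (k, k)) ha hb h x

theorem schwartzSup_le {k : ℕ} {h : 𝓢(E, ℂ)} {M : ℝ} (hM : 0 ≤ M)
    (H : ∀ b ≤ k, ∀ x, (1 + ‖x‖) ^ k * ‖iteratedFDeriv ℝ b h x‖ ≤ M) :
    schwartzSup E k h ≤ M := by
  refine Seminorm.finset_sup_apply_le hM fun i hi => ?_
  have hi' : i.1 ≤ k ∧ i.2 ≤ k := by simpa [Prod.le_def] using hi
  refine seminorm_le_bound ℂ i.1 i.2 h hM fun x => le_trans ?_ (H i.2 hi'.2 x)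
  gcongr
  calc ‖x‖ ^ i.1 ≤ (1 + ‖x‖) ^ i.1 := by gcongr; linarith
    _ ≤ (1 + ‖x‖) ^ k := pow_le_pow_right₀ (by linarith [norm_nonneg x]) hi'.1

theorem seminorm_le_schwartzSup {k : ℕ} {i : ℕ × ℕ} (h1 : i.1 ≤ k) (h2 : i.2 ≤ k)
    (h : 𝓢(E, ℂ)) : schwartzSeminormFamily ℂ E ℂ i h ≤ schwartzSup E k h :=
  Seminorm.le_finset_sup_apply (p := schwartzSeminormFamily ℂ E ℂ)
    (Finset.mem_Iic.2 (Prod.mk_le_mk.2 ⟨h1, h2⟩ : i ≤ (k, k)))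

theorem schwartzSup_mono {k k' : ℕ} (hk : k ≤ k') (h : 𝓢(E, ℂ)) :
    schwartzSup E k h ≤ schwartzSup E k' h := by
  refine Seminorm.finset_sup_apply_le (apply_nonneg _ _) fun i hi => ?_
  have hi' : i.1 ≤ k ∧ i.2 ≤ k := by simpa [Prod.le_def] using hi
  exact seminorm_le_schwartzSup (hi'.1.trans hk) (hi'.2.trans hk) h

theorem eq_zero_of_schwartzSup_eq_zero {k : ℕ} {h : 𝓢(E, ℂ)} (hh : schwartzSup E k h = 0) :
    h = 0 := by
  ext x
  have := weight_mul_le_schwartzSup (Nat.zero_le k) (Nat.zero_le k) h x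
  simpa [hh] using this

theorem finset_sup_le_schwartzSup (s : Finset (ℕ × ℕ)) :
    ∃ k, ∀ h, s.sup (schwartzSeminormFamily ℂ E ℂ) h ≤ schwartzSup E k h := by
  refine ⟨s.sup Prod.fst ⊔ s.sup Prod.snd, fun h => ?_⟩
  refine Seminorm.finset_sup_apply_le (apply_nonneg _ _) fun i hi => ?_
  exact seminorm_le_schwartzSup
    ((Finset.le_sup (f := Prod.fst) hi).trans le_sup_left)
    ((Finset.le_sup (f := Prod.snd) hi).trans le_sup_right) h

theorem exists_norm_le_schwartzSup (L : 𝓢(E, ℂ) →L[ℂ] ℂ) :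
    ∃ k, ∃ C ≥ 0, ∀ h, ‖L h‖ ≤ C * schwartzSup E k h := by
  obtain ⟨s, C, -, hC⟩ := Seminorm.bound_of_continuous (schwartz_withSeminorms ℂ E ℂ)
    ((normSeminorm ℂ ℂ).comp L.toLinearMap) (by exact L.continuous.norm)
  obtain ⟨k, hk⟩ := finset_sup_le_schwartzSup (E := E) s
  refine ⟨k, C, C.2, fun h => (hC h).trans ?_⟩
  exact mul_le_mul_of_nonneg_left (hk h) C.2

end Seminorms

section Joint

variable {E F : Type*} [NormedAddCommGroup E] [NormedSpace ℝ E]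
  [NormedAddCommGroup F] [NormedSpace ℝ F]

/-- A continuous linear map from a Schwartz space to the strong dual of another one is jointly
continuous as a bilinear form. -/
theorem exists_joint_bound (Λ : 𝓢(E, ℂ) →L[ℂ] (𝓢(F, ℂ) →L[ℂ] ℂ)) :
    ∃ k, ∃ C ≥ 0, ∀ f g, ‖Λ f g‖ ≤ C * schwartzSup E k f * schwartzSup F k g := by
  by_contra! hcon
  have key : ∀ j : ℕ, ∃ f g, schwartzSup E j f ≤ ((j : ℝ) + 1)⁻¹ ∧ schwartzSup F j g ≤ 1 ∧
      1 < ‖Λ f g‖ := by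
    intro j
    obtain ⟨f, g, hfg⟩ := hcon j (j + 1) (by positivity)
    have hf : 0 < schwartzSup E j f := by
      refine (apply_nonneg _ _).lt_of_ne fun h0 => ?_
      rw [← h0, eq_zero_of_schwartzSup_eq_zero h0.symm] at hfg
      simp at hfg
    have hg : 0 < schwartzSup F j g := by
      refine (apply_nonneg _ _).lt_of_ne fun h0 => ?_
      rw [← h0, eq_zero_of_schwartzSup_eq_zero h0.symm] at hfg
      simp at hfg
    set a := schwartzSup E j f
    set b := schwartzSup F j g
    have hnorm : ‖((((j : ℝ) + 1) * a)⁻¹ : ℂ)‖ = (((j : ℝ) + 1) * a)⁻¹ := by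
      rw [← Complex.ofReal_one, ← Complex.ofReal_add, ← Complex.ofReal_mul,
        ← Complex.ofReal_inv, Complex.norm_real, Real.norm_of_nonneg (by positivity)]
    refine ⟨((((j : ℝ) + 1) * a)⁻¹ : ℂ) • f, ((b : ℂ)⁻¹) • g, ?_, ?_, ?_⟩
    · rw [map_smul_eq_mul]
      rw [hnorm]
      change _ * a ≤ _
      rw [mul_inv, mul_assoc, inv_mul_cancel₀ hf.ne', mul_one]
    · rw [map_smul_eq_mul]
      change _ * b ≤ _
      rw [norm_inv, Complex.norm_real, Real.norm_of_nonneg hg.le, inv_mul_cancel₀ hg.ne']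
    · rw [map_smul, map_smul, _root_.smul_apply, norm_smul, norm_smul, hnorm,
        norm_inv, Complex.norm_real, Real.norm_of_nonneg hg.le, ← mul_assoc, ← mul_inv,
        inv_mul_eq_div, one_lt_div (by positivity)]
      linarith
  choose f g hf hg hfg using key
  have hbdd : Bornology.IsVonNBounded ℂ (Set.range g) := by
    rw [(schwartz_withSeminorms ℂ F ℂ).isVonNBounded_iff_seminorm_bounded]
    intro i
    refine ⟨∑ j ∈ Finset.range (max i.1 i.2), schwartzSeminormFamily ℂ F ℂ i (g j) + 2,
      by positivity, ?_⟩
    rintro _ ⟨j, rfl⟩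
    rcases lt_or_ge j (max i.1 i.2) with hj | hj
    · have := Finset.single_le_sum (f := fun j => schwartzSeminormFamily ℂ F ℂ i (g j))
        (fun _ _ => apply_nonneg _ _) (Finset.mem_range.2 hj)
      linarith
    · have h1 := seminorm_le_schwartzSup ((le_max_left _ _).trans hj)
        ((le_max_right _ _).trans hj) (g j)
      have : 0 ≤ ∑ j ∈ Finset.range (max i.1 i.2), schwartzSeminormFamily ℂ F ℂ i (g j) :=
        Finset.sum_nonneg fun _ _ => apply_nonneg _ _
      linarith [hg j]
  have hlim : Tendsto f atTop (𝓝 0) := by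
    rw [(schwartz_withSeminorms ℂ E ℂ).tendsto_nhds]
    intro i ε hε
    obtain ⟨N, hN⟩ := exists_nat_gt ε⁻¹
    filter_upwards [eventually_ge_atTop (max N (max i.1 i.2))] with j hj
    rw [sub_zero]
    have h1 := seminorm_le_schwartzSup ((le_max_left _ _).trans ((le_max_right _ _).trans hj))
        ((le_max_right _ _).trans ((le_max_right _ _).trans hj)) (f j)
    refine (h1.trans (hf j)).trans_lt ?_
    have : (N : ℝ) ≤ j := by exact_mod_cast (le_max_left _ _).trans hj
    exact inv_lt_of_inv_lt₀ hε (by linarith)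
  have hev := (ContinuousLinearMap.eventually_nhds_zero_mapsTo (σ := RingHom.id ℂ) (F := ℂ) hbdd
    (Metric.ball_mem_nhds (0 : ℂ) one_pos))
  have hΛ : Tendsto (fun j => Λ (f j)) atTop (𝓝 0) := by
    have := (Λ.continuous.tendsto 0).comp hlim
    rwa [map_zero] at this
  obtain ⟨j, hj⟩ := (hΛ.eventually hev).exists
  have := hj ⟨j, rfl⟩
  rw [mem_ball_zero_iff] at this
  exact absurd this (hfg j).le.not_gt

end Joint

section Translation

variable {E : Type*} [NormedAddCommGroup E] [NormedSpace ℝ E]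

theorem differentiable_iteratedFDeriv (h : 𝓢(E, ℂ)) (l : ℕ) :
    Differentiable ℝ (iteratedFDeriv ℝ l h) :=
  (h.smooth ⊤).differentiable_iteratedFDeriv (mod_cast ENat.natCast_lt_top l)

theorem iteratedFDeriv_lineDerivOp (h : 𝓢(E, ℂ)) (a : E) (l : ℕ) (x : E) :
    iteratedFDeriv ℝ l (∂_{a} h : 𝓢(E, ℂ)) x = fderiv ℝ (iteratedFDeriv ℝ l h) x a := by
  induction l generalizing x with
  | zero =>
    ext v
    rw [iteratedFDeriv_zero_apply, iteratedFDeriv_zero_eq_comp,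
      LinearIsometryEquiv.comp_fderiv]
    simp [lineDerivOp_apply_eq_fderiv]
  | succ l ih =>
    have hfun : iteratedFDeriv ℝ l (∂_{a} h : 𝓢(E, ℂ)) =
        fun x => fderiv ℝ (iteratedFDeriv ℝ l h) x a := funext ih
    have hC : ContDiff ℝ 2 (iteratedFDeriv ℝ l h) :=
      (h.smooth ⊤).iteratedFDeriv_right (m := 2) (i := l) (by
        rw [show (2 : WithTop ℕ∞) + l = ((2 + l : ℕ) : ℕ∞) by push_cast; rfl]
        exact WithTop.coe_le_coe.2 le_top)
    have hd : Differentiable ℝ (fderiv ℝ (iteratedFDeriv ℝ l h)) :=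
      (hC.fderiv_right (m := 1) (by norm_num)).differentiable one_ne_zero
    have hsymm := hC.contDiffAt.isSymmSndFDerivAt (x := x) (by simp)
    ext v
    rw [iteratedFDeriv_succ_eq_comp_left, Function.comp_apply, hfun,
      continuousMultilinearCurryLeftEquiv_symm_apply,
      fderiv_clm_apply (hd x) (differentiableAt_const a)]
    have hs : HasFDerivAt (fun y => iteratedFDeriv ℝ (l + 1) h y v)
        ((ContinuousMultilinearMap.apply ℝ (fun _ : Fin (l + 1) => E) ℂ v).comp
          (fderiv ℝ (iteratedFDeriv ℝ (l + 1) h) x)) x :=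
      (ContinuousMultilinearMap.apply ℝ (fun _ : Fin (l + 1) => E) ℂ v).hasFDerivAt.comp x
        (differentiable_iteratedFDeriv h (l + 1) x).hasFDerivAt
    have hs' : HasFDerivAt (fun y => iteratedFDeriv ℝ (l + 1) h y v)
        ((ContinuousMultilinearMap.apply ℝ (fun _ : Fin l => E) ℂ (Fin.tail v)).comp
          ((fderiv ℝ (fderiv ℝ (iteratedFDeriv ℝ l h)) x).flip (v 0))) x := by
      have h1 := (hd x).hasFDerivAt.clm_apply (hasFDerivAt_const (v 0) x)
      rw [ContinuousLinearMap.comp_zero, zero_add] at h1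
      exact (ContinuousMultilinearMap.apply ℝ (fun _ : Fin l => E) ℂ
        (Fin.tail v)).hasFDerivAt.comp x h1
    have := DFunLike.congr_fun (hs.unique hs') a
    simp only [fderiv_fun_const, Pi.zero_apply, ContinuousLinearMap.comp_zero, zero_add,
      ContinuousLinearMap.flip_apply, ContinuousLinearMap.comp_apply,
      ContinuousMultilinearMap.apply_apply] at this ⊢
    rw [this, hsymm]

theorem iteratedFDeriv_compSubConstCLM (h : 𝓢(E, ℂ)) (a : E) (l : ℕ) (x : E) :
    iteratedFDeriv ℝ l (compSubConstCLM ℂ a h) x = iteratedFDeriv ℝ l h (x - a) :=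
  iteratedFDeriv_comp_sub l a x

theorem one_add_norm_le_mul {E : Type*} [NormedAddCommGroup E] (x a : E) :
    1 + ‖x‖ ≤ (1 + ‖x - a‖) * (1 + ‖a‖) := by
  have := norm_add_le (x - a) a
  rw [sub_add_cancel] at this
  nlinarith [norm_nonneg (x - a), norm_nonneg a]

theorem schwartzSup_lineDerivOp_le (k : ℕ) (h : 𝓢(E, ℂ)) (a : E) :
    schwartzSup E k (∂_{a} h) ≤ 2 ^ (k + 1) * schwartzSup E (k + 1) h * ‖a‖ := by
  refine schwartzSup_le (by positivity) fun b hb x => ?_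
  rw [iteratedFDeriv_lineDerivOp]
  calc _ ≤ (1 + ‖x‖) ^ k * (‖fderiv ℝ (iteratedFDeriv ℝ b h) x‖ * ‖a‖) := by
        gcongr; exact ContinuousLinearMap.le_opNorm _ _
    _ = (1 + ‖x‖) ^ k * ‖iteratedFDeriv ℝ (b + 1) h x‖ * ‖a‖ := by
        rw [norm_fderiv_iteratedFDeriv, mul_assoc]
    _ ≤ _ := mul_le_mul_of_nonneg_right
        (weight_mul_le_schwartzSup (by lia) (by lia) h x) (norm_nonneg a)

theorem schwartzSup_compSubConstCLM_le (k : ℕ) (h : 𝓢(E, ℂ)) (a : E) :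
    schwartzSup E k (compSubConstCLM ℂ a h) ≤ (1 + ‖a‖) ^ k * (2 ^ k * schwartzSup E k h) := by
  refine schwartzSup_le (by positivity) fun b hb x => ?_
  rw [iteratedFDeriv_compSubConstCLM]
  calc _ ≤ ((1 + ‖x - a‖) * (1 + ‖a‖)) ^ k * ‖iteratedFDeriv ℝ b h (x - a)‖ := by
        gcongr; exact one_add_norm_le_mul x a
    _ = (1 + ‖a‖) ^ k * ((1 + ‖x - a‖) ^ k * ‖iteratedFDeriv ℝ b h (x - a)‖) := by
        rw [mul_pow]; ring
    _ ≤ _ := mul_le_mul_of_nonneg_left (weight_mul_le_schwartzSup le_rfl hb h _) (by positivity)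

theorem weight_mul_iteratedFDeriv_sub_le {k K b : ℕ} (hk : k ≤ K) (hb : b + 1 ≤ K)
    (h : 𝓢(E, ℂ)) {x z : E} (hz : ‖z - x‖ ≤ 1) :
    (1 + ‖x‖) ^ k * ‖iteratedFDeriv ℝ b h z - iteratedFDeriv ℝ b h x‖ ≤
      2 ^ k * (2 ^ K * schwartzSup E K h) * ‖z - x‖ := by
  have hpos : 0 < (1 + ‖x‖) ^ k := by positivity
  rw [← le_div_iff₀' hpos, mul_div_right_comm]
  refine (convex_closedBall x 1).norm_image_sub_le_of_norm_fderiv_le (𝕜 := ℝ)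
    (fun w _ => differentiable_iteratedFDeriv h b w) (fun w hw => ?_)
    (by simp) (by simpa [dist_eq_norm] using hz)
  rw [norm_fderiv_iteratedFDeriv, le_div_iff₀' hpos]
  have hw' : ‖x - w‖ ≤ 1 := by simpa [dist_eq_norm, norm_sub_rev] using hw
  have h2 : 1 + ‖x‖ ≤ 2 * (1 + ‖w‖) := by
    have := norm_add_le (x - w) w
    rw [sub_add_cancel] at this
    linarith [norm_nonneg w]
  calc _ ≤ (2 * (1 + ‖w‖)) ^ k * ‖iteratedFDeriv ℝ (b + 1) h w‖ := by gcongr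
    _ = 2 ^ k * ((1 + ‖w‖) ^ k * ‖iteratedFDeriv ℝ (b + 1) h w‖) := by rw [mul_pow]; ring
    _ ≤ _ := mul_le_mul_of_nonneg_left (weight_mul_le_schwartzSup hk hb h w) (by positivity)

theorem schwartzSup_translate_sub_le (k : ℕ) (h : 𝓢(E, ℂ)) {a : E} (ha : ‖a‖ ≤ 1) :
    schwartzSup E k (compSubConstCLM ℂ a h - h) ≤
      2 ^ k * (2 ^ (k + 1) * schwartzSup E (k + 1) h) * ‖a‖ := by
  refine schwartzSup_le (by positivity) fun b hb x => ?_
  have : iteratedFDeriv ℝ b (compSubConstCLM ℂ a h - h : 𝓢(E, ℂ)) x =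
      iteratedFDeriv ℝ b h (x - a) - iteratedFDeriv ℝ b h x := by
    rw [← iteratedFDeriv_compSubConstCLM]
    exact iteratedFDeriv_sub_apply (SchwartzMap.contDiffAt _ _) (SchwartzMap.contDiffAt _ _)
  rw [this]
  have hx : ‖x - a - x‖ = ‖a‖ := by rw [sub_sub_cancel_left, norm_neg]
  simpa [hx] using weight_mul_iteratedFDeriv_sub_le (k := k) (K := k + 1) (b := b) (by lia)
    (by lia) h (x := x) (z := x - a) (by rwa [hx])

theorem schwartzSup_translate_sub_add_le (k : ℕ) (h : 𝓢(E, ℂ)) {a : E} (ha : ‖a‖ ≤ 1) :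
    schwartzSup E k (compSubConstCLM ℂ a h - h + ∂_{a} h) ≤
      2 ^ k * (2 ^ (k + 2) * schwartzSup E (k + 2) h) * ‖a‖ * ‖a‖ := by
  refine schwartzSup_le (by positivity) fun b hb x => ?_
  have : iteratedFDeriv ℝ b (compSubConstCLM ℂ a h - h + ∂_{a} h : 𝓢(E, ℂ)) x =
      iteratedFDeriv ℝ b h (x - a) - iteratedFDeriv ℝ b h x -
        fderiv ℝ (iteratedFDeriv ℝ b h) x (x - a - x) := by
    have h1 : iteratedFDeriv ℝ b (compSubConstCLM ℂ a h - h + ∂_{a} h : 𝓢(E, ℂ)) x =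
        iteratedFDeriv ℝ b (compSubConstCLM ℂ a h - h : 𝓢(E, ℂ)) x +
        iteratedFDeriv ℝ b (∂_{a} h : 𝓢(E, ℂ)) x :=
      iteratedFDeriv_add_apply (SchwartzMap.contDiffAt _ _) (SchwartzMap.contDiffAt _ _)
    have h2 : iteratedFDeriv ℝ b (compSubConstCLM ℂ a h - h : 𝓢(E, ℂ)) x =
        iteratedFDeriv ℝ b (compSubConstCLM ℂ a h) x - iteratedFDeriv ℝ b h x :=
      iteratedFDeriv_sub_apply (SchwartzMap.contDiffAt _ _) (SchwartzMap.contDiffAt _ _)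
    rw [h1, h2, iteratedFDeriv_compSubConstCLM, iteratedFDeriv_lineDerivOp, sub_sub_cancel_left,
      map_neg, sub_neg_eq_add]
  rw [this]
  have hx : ‖x - a - x‖ = ‖a‖ := by rw [sub_sub_cancel_left, norm_neg]
  have hpos : 0 < (1 + ‖x‖) ^ k := by positivity
  rw [← le_div_iff₀' hpos, mul_div_right_comm]
  refine ((convex_closedBall x ‖a‖).norm_image_sub_le_of_norm_fderiv_le' (𝕜 := ℝ)
    (fun w _ => differentiable_iteratedFDeriv h b w) (fun w hw => ?_)
    (by simp) (by simp)).trans_eq (by rw [hx])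
  have hc : iteratedFDeriv ℝ (b + 1) h w - iteratedFDeriv ℝ (b + 1) h x =
      (continuousMultilinearCurryLeftEquiv ℝ (fun _ : Fin (b + 1) => E) ℂ).symm
        (fderiv ℝ (iteratedFDeriv ℝ b h) w - fderiv ℝ (iteratedFDeriv ℝ b h) x) := by
    rw [LinearIsometryEquiv.map_sub]; rfl
  rw [← LinearIsometryEquiv.norm_map
    (continuousMultilinearCurryLeftEquiv ℝ (fun _ : Fin (b + 1) => E) ℂ).symm, ← hc,
    le_div_iff₀' hpos]
  have hw' : ‖w - x‖ ≤ ‖a‖ := by simpa [dist_eq_norm] using hw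
  refine (weight_mul_iteratedFDeriv_sub_le (K := k + 2) (by lia) (by lia) h
    (hw'.trans ha)).trans ?_
  gcongr

end Translation

section Averaging

theorem norm_iteratedFDeriv_le_schwartzSup {E : Type*} [NormedAddCommGroup E] [NormedSpace ℝ E]
    (h : 𝓢(E, ℂ)) (l : ℕ) (x : E) :
    ‖iteratedFDeriv ℝ l h x‖ ≤ 2 ^ l * schwartzSup E l h := by
  simpa using weight_mul_le_schwartzSup (Nat.zero_le l) le_rfl h x

theorem continuous_iteratedFDeriv {E : Type*} [NormedAddCommGroup E] [NormedSpace ℝ E]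
    (h : 𝓢(E, ℂ)) (l : ℕ) : Continuous (iteratedFDeriv ℝ l h) :=
  (differentiable_iteratedFDeriv h l).continuous

variable {E : Type*} [NormedAddCommGroup E] [NormedSpace ℝ E] [FiniteDimensional ℝ E]
  [MeasureSpace E] [BorelSpace E] [(volume : Measure E).IsAddHaarMeasure]

theorem integrable_smul_of_bounded {F : Type*} [NormedAddCommGroup F] [NormedSpace ℂ F]
    (ρ : 𝓢(E, ℂ)) {G : E → F} (hG : Continuous G) {C : ℝ} (hC : ∀ x, ‖G x‖ ≤ C) :
    Integrable (fun u => ρ u • G u) := by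
  refine (ρ.integrable.norm.mul_const C).mono'
    (ρ.continuous.smul hG).aestronglyMeasurable (.of_forall fun u => ?_)
  rw [norm_smul]
  exact mul_le_mul_of_nonneg_left (hC u) (norm_nonneg _)

theorem integrable_smul_iteratedFDeriv (ρ h : 𝓢(E, ℂ)) (t : ℝ) (l : ℕ) (x : E) :
    Integrable (fun u => ρ u • iteratedFDeriv ℝ l h (x - t • u)) :=
  integrable_smul_of_bounded ρ
    ((continuous_iteratedFDeriv h l).comp (by fun_prop))
    fun _ => norm_iteratedFDeriv_le_schwartzSup h l _

theorem hasFDerivAt_integral_smul {F : Type*} [NormedAddCommGroup F] [NormedSpace ℝ F]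
    [NormedSpace ℂ F] [SMulCommClass ℝ ℂ F] [IsScalarTower ℝ ℂ F] (ρ : 𝓢(E, ℂ)) {G : E → F}
    (hG : ContDiff ℝ 1 G)
    {C C' : ℝ} (hC : ∀ x, ‖G x‖ ≤ C) (hC' : ∀ x, ‖fderiv ℝ G x‖ ≤ C') (t : ℝ) (x : E) :
    HasFDerivAt (fun x => ∫ u, ρ u • G (x - t • u)) (∫ u, ρ u • fderiv ℝ G (x - t • u)) x := by
  have hI : ∀ x, Integrable (fun u => ρ u • G (x - t • u)) := fun x =>
    integrable_smul_of_bounded ρ (hG.continuous.comp (by fun_prop)) fun u => hC _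
  refine hasFDerivAt_integral_of_dominated_of_fderiv_le (s := Set.univ) (𝕜 := ℝ)
    (F := fun x u => ρ u • G (x - t • u)) (F' := fun x u => ρ u • fderiv ℝ G (x - t • u))
    (bound := fun u => ‖ρ u‖ * C')
    univ_mem (.of_forall fun x => (hI x).aestronglyMeasurable) (hI x) ?_
    (.of_forall fun u x _ => ?_) (ρ.integrable.norm.mul_const _) (.of_forall fun u x _ => ?_)
  · exact (ρ.continuous.smul
      ((hG.continuous_fderiv one_ne_zero).comp (by fun_prop))).aestronglyMeasurable
  · rw [norm_smul]
    exact mul_le_mul_of_nonneg_left (hC' _) (norm_nonneg _)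
  · have h1 : HasFDerivAt (fun x => x - t • u) (ContinuousLinearMap.id ℝ E) x :=
      (hasFDerivAt_id x).sub_const _
    have h2 := (((hG.differentiable one_ne_zero) (x - t • u)).hasFDerivAt.comp x h1).const_smul
      (ρ u)
    rwa [ContinuousLinearMap.comp_id] at h2

theorem fderiv_integral_smul_apply {F : Type*} [NormedAddCommGroup F] [NormedSpace ℝ F]
    [NormedSpace ℂ F] [SMulCommClass ℝ ℂ F] [IsScalarTower ℝ ℂ F] [CompleteSpace F]
    (ρ : 𝓢(E, ℂ)) {G : E → F}
    (hG : ContDiff ℝ 1 G)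
    {C C' : ℝ} (hC : ∀ x, ‖G x‖ ≤ C) (hC' : ∀ x, ‖fderiv ℝ G x‖ ≤ C') (t : ℝ) (x w : E) :
    fderiv ℝ (fun x => ∫ u, ρ u • G (x - t • u)) x w =
      ∫ u, ρ u • fderiv ℝ G (x - t • u) w := by
  rw [(hasFDerivAt_integral_smul ρ hG hC hC' t x).fderiv, ContinuousLinearMap.integral_apply]
  · rfl
  · exact integrable_smul_of_bounded ρ ((hG.continuous_fderiv one_ne_zero).comp (by fun_prop))
      fun _ => hC' _

theorem contDiff_iteratedFDeriv {E : Type*} [NormedAddCommGroup E] [NormedSpace ℝ E]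
    (h : 𝓢(E, ℂ)) (l j : ℕ) : ContDiff ℝ j (iteratedFDeriv ℝ l h) :=
  (h.smooth ⊤).iteratedFDeriv_right (i := l) (by
    rw [show (j : WithTop ℕ∞) + l = ((j + l : ℕ) : ℕ∞) by push_cast; rfl]
    exact WithTop.coe_le_coe.2 le_top)

theorem norm_fderiv_iteratedFDeriv_le_schwartzSup {E : Type*} [NormedAddCommGroup E]
    [NormedSpace ℝ E] (h : 𝓢(E, ℂ)) (l : ℕ) (x : E) :
    ‖fderiv ℝ (iteratedFDeriv ℝ l h) x‖ ≤ 2 ^ (l + 1) * schwartzSup E (l + 1) h := by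
  rw [norm_fderiv_iteratedFDeriv]
  exact norm_iteratedFDeriv_le_schwartzSup h (l + 1) x

theorem iteratedFDeriv_integral_smul (ρ h : 𝓢(E, ℂ)) (t : ℝ) (l : ℕ) :
    iteratedFDeriv ℝ l (fun x => ∫ u, ρ u • h (x - t • u)) =
      fun x => ∫ u, ρ u • iteratedFDeriv ℝ l h (x - t • u) := by
  induction l with
  | zero =>
    ext x v
    rw [ContinuousMultilinearMap.integral_apply (integrable_smul_iteratedFDeriv ρ h t 0 x)]
    simp
  | succ l ih =>
    ext x v
    have h1 : Integrable fun u => ρ u • (fderiv ℝ (iteratedFDeriv ℝ l h) (x - t • u) (v 0)) := by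
      simp only [← iteratedFDeriv_lineDerivOp]
      exact integrable_smul_iteratedFDeriv ρ _ t l x
    rw [iteratedFDeriv_succ_apply_left, ih,
      fderiv_integral_smul_apply ρ (contDiff_iteratedFDeriv h l 1)
        (norm_iteratedFDeriv_le_schwartzSup h l)
        (norm_fderiv_iteratedFDeriv_le_schwartzSup h l),
      ContinuousMultilinearMap.integral_apply h1,
      ContinuousMultilinearMap.integral_apply (integrable_smul_iteratedFDeriv ρ h t (l + 1) x)]
    rfl

/-- The weighted `L¹` norm of a Schwartz function. -/
noncomputable def schwartzMoment {E : Type*} [NormedAddCommGroup E] [NormedSpace ℝ E]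
    [MeasureSpace E] (ρ : 𝓢(E, ℂ)) (k : ℕ) : ℝ := ∫ u, (1 + ‖u‖) ^ k * ‖ρ u‖

theorem schwartzMoment_nonneg {E : Type*} [NormedAddCommGroup E] [NormedSpace ℝ E]
    [MeasureSpace E] (ρ : 𝓢(E, ℂ)) (k : ℕ) : 0 ≤ schwartzMoment ρ k :=
  integral_nonneg fun _ => by positivity

theorem integrable_schwartzMoment (ρ : 𝓢(E, ℂ)) (k : ℕ) :
    Integrable (fun u => (1 + ‖u‖) ^ k * ‖ρ u‖) := by
  simp only [add_comm (1 : ℝ), add_pow, one_pow, mul_one, Finset.sum_mul]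
  refine integrable_finsetSum _ fun i _ => ?_
  refine ((ρ.integrable_pow_mul volume i).const_mul (k.choose i : ℝ)).congr
    (.of_forall fun u => ?_)
  ring

theorem weight_mul_integral_le (ρ h : 𝓢(E, ℂ)) (t : ℝ) {k l K : ℕ} (hk : k ≤ K) (hl : l ≤ K)
    (x : E) :
    (1 + ‖x‖) ^ k * ‖∫ u, ρ u • iteratedFDeriv ℝ l h (x - t • u)‖ ≤
      (1 + |t|) ^ k * schwartzMoment ρ k * (2 ^ K * schwartzSup E K h) := by
  have hpos : 0 < (1 + ‖x‖) ^ k := by positivity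
  rw [← le_div_iff₀' hpos]
  have hint := ((integrable_schwartzMoment ρ k).const_mul ((1 + |t|) ^ k)).mul_const
    ((2 ^ K * schwartzSup E K h) / (1 + ‖x‖) ^ k)
  refine (norm_integral_le_of_norm_le hint (.of_forall fun u => ?_)).trans_eq ?_
  · rw [norm_smul, ← mul_div_assoc, le_div_iff₀ hpos]
    have h1 : 1 + ‖x‖ ≤ (1 + ‖x - t • u‖) * ((1 + |t|) * (1 + ‖u‖)) := by
      refine (one_add_norm_le_mul x (t • u)).trans ?_
      gcongr
      rw [norm_smul, Real.norm_eq_abs]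
      nlinarith [norm_nonneg u, abs_nonneg t]
    calc _ ≤ ‖ρ u‖ * ‖iteratedFDeriv ℝ l h (x - t • u)‖ *
          ((1 + ‖x - t • u‖) * ((1 + |t|) * (1 + ‖u‖))) ^ k := by gcongr
      _ = (1 + |t|) ^ k * ((1 + ‖u‖) ^ k * ‖ρ u‖) *
          ((1 + ‖x - t • u‖) ^ k * ‖iteratedFDeriv ℝ l h (x - t • u)‖) := by
        rw [mul_pow, mul_pow]; ring
      _ ≤ _ := mul_le_mul_of_nonneg_left (weight_mul_le_schwartzSup hk hl h _) (by positivity)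
  · rw [integral_mul_const, integral_const_mul, ← mul_div_assoc]
    rfl

/-- The averaging operator sending `h` to `v ↦ ∫ ρ(u) h(v - t u) du`. -/
noncomputable def smear (ρ : 𝓢(E, ℂ)) (t : ℝ) : 𝓢(E, ℂ) →L[ℂ] 𝓢(E, ℂ) :=
  mkCLM (fun h x => ∫ u, ρ u • h (x - t • u))
    (fun f g x => by
      have hf := integrable_smul_of_bounded ρ (f.continuous.comp (g := f)
        (f := fun u => x - t • u) (by fun_prop)) (fun u => by
          simpa using norm_iteratedFDeriv_le_schwartzSup f 0 (x - t • u))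
      have hg := integrable_smul_of_bounded ρ (g.continuous.comp (g := g)
        (f := fun u => x - t • u) (by fun_prop)) (fun u => by
          simpa using norm_iteratedFDeriv_le_schwartzSup g 0 (x - t • u))
      simp only [add_apply, smul_add]
      exact integral_add hf hg)
    (fun a f x => by
      simp only [_root_.smul_apply, RingHom.id_apply, smul_comm _ a]
      exact integral_smul _ _)
    (fun h => contDiff_of_differentiable_iteratedFDeriv fun l _ => by
      rw [iteratedFDeriv_integral_smul]
      exact fun x => (hasFDerivAt_integral_smul ρ (contDiff_iteratedFDeriv h l 1)
        (norm_iteratedFDeriv_le_schwartzSup h l)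
        (norm_fderiv_iteratedFDeriv_le_schwartzSup h l) t x).differentiableAt)
    (fun i => by
      refine ⟨Finset.Iic (max i.1 i.2, max i.1 i.2),
        (1 + |t|) ^ i.1 * schwartzMoment ρ i.1 * 2 ^ max i.1 i.2, by
          have := schwartzMoment_nonneg ρ i.1
          positivity, fun h x => ?_⟩
      rw [iteratedFDeriv_integral_smul, mul_assoc]
      refine le_trans ?_ (weight_mul_integral_le ρ h t (le_max_left i.1 i.2)
        (le_max_right _ _) x)
      gcongr
      linarith)

theorem smear_apply (ρ h : 𝓢(E, ℂ)) (t : ℝ) (x : E) :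
    smear ρ t h x = ∫ u, ρ u • h (x - t • u) := rfl

theorem iteratedFDeriv_smear (ρ h : 𝓢(E, ℂ)) (t : ℝ) (l : ℕ) (x : E) :
    iteratedFDeriv ℝ l (smear ρ t h) x = ∫ u, ρ u • iteratedFDeriv ℝ l h (x - t • u) :=
  congrFun (iteratedFDeriv_integral_smul ρ h t l) x

theorem schwartzSup_smear_le (ρ h : 𝓢(E, ℂ)) {t : ℝ} (ht : |t| ≤ 1) (k : ℕ) :
    schwartzSup E k (smear ρ t h) ≤ 2 ^ k * schwartzMoment ρ k * 2 ^ k * schwartzSup E k h := by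
  have h0 := schwartzMoment_nonneg ρ k
  refine schwartzSup_le (by positivity) fun b hb x => ?_
  rw [iteratedFDeriv_smear, mul_assoc _ (2 ^ k)]
  refine (weight_mul_integral_le ρ h t le_rfl hb x).trans ?_
  have : (1 + |t|) ^ k ≤ 2 ^ k := by gcongr; linarith
  have h1 : 0 ≤ 2 ^ k * schwartzSup E k h := by positivity
  exact mul_le_mul_of_nonneg_right (mul_le_mul_of_nonneg_right this h0) h1

theorem smear_compSubConstCLM (ρ h : 𝓢(E, ℂ)) (t : ℝ) (a : E) :
    smear ρ t (compSubConstCLM ℂ a h) = compSubConstCLM ℂ a (smear ρ t h) := by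
  ext x
  simp only [compSubConstCLM_apply, smear_apply, sub_right_comm]

end Averaging

section Embedding

variable {E : Type*} [NormedAddCommGroup E] [NormedSpace ℝ E]

/-- A Banach space in which the seminorm `schwartzSup E k` is realised: bounded families indexed
by a point, an order of differentiation and directions. -/
abbrev WeightedJets (E : Type*) [NormedAddCommGroup E] (k : ℕ) : Type _ :=
  lp (fun _ : E × (l : Fin (k + 1)) × (Fin l → E) => ℂ) ⊤

theorem norm_weightedJet_aux_le {k l : ℕ} (hl : l ≤ k) (h : 𝓢(E, ℂ)) (x : E) (v : Fin l → E) :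
    ‖(((1 + ‖x‖) ^ k / ∏ i, ‖v i‖ : ℝ) : ℂ) * iteratedFDeriv ℝ l h x v‖ ≤
      2 ^ k * schwartzSup E k h := by
  rw [norm_mul, Complex.norm_real, Real.norm_of_nonneg (by positivity), div_mul_eq_mul_div]
  refine div_le_of_le_mul₀ (by positivity) (by positivity) ?_
  calc _ ≤ (1 + ‖x‖) ^ k * (‖iteratedFDeriv ℝ l h x‖ * ∏ i, ‖v i‖) :=
        mul_le_mul_of_nonneg_left (ContinuousMultilinearMap.le_opNorm _ _) (by positivity)
    _ = (1 + ‖x‖) ^ k * ‖iteratedFDeriv ℝ l h x‖ * ∏ i, ‖v i‖ := by ring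
    _ ≤ _ := mul_le_mul_of_nonneg_right (weight_mul_le_schwartzSup le_rfl hl h x) (by positivity)

/-- The weighted and normalised derivatives of order at most `k` of a Schwartz function. -/
noncomputable def weightedJet (k : ℕ) : 𝓢(E, ℂ) →ₗ[ℂ] WeightedJets E k where
  toFun h := ⟨fun i => (((1 + ‖i.1‖) ^ k / ∏ j, ‖i.2.2 j‖ : ℝ) : ℂ) *
      iteratedFDeriv ℝ i.2.1 h i.1 i.2.2, memℓp_infty
        ⟨2 ^ k * schwartzSup E k h, by
          rintro _ ⟨i, rfl⟩
          exact norm_weightedJet_aux_le (Nat.lt_succ_iff.1 i.2.1.2) h i.1 i.2.2⟩⟩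
  map_add' f g := by
    ext i
    have : iteratedFDeriv ℝ i.2.1 (f + g : 𝓢(E, ℂ)) i.1 =
        iteratedFDeriv ℝ i.2.1 f i.1 + iteratedFDeriv ℝ i.2.1 g i.1 :=
      iteratedFDeriv_add_apply (SchwartzMap.contDiffAt _ _) (SchwartzMap.contDiffAt _ _)
    simp only [this, lp.coeFn_add, Pi.add_apply, _root_.add_apply, mul_add]
  map_smul' c f := by
    ext i
    have : iteratedFDeriv ℝ i.2.1 (c • f : 𝓢(E, ℂ)) i.1 = c • iteratedFDeriv ℝ i.2.1 f i.1 :=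
      iteratedFDeriv_const_smul_apply (SchwartzMap.contDiffAt _ _)
    simp only [this, lp.coeFn_smul, Pi.smul_apply, _root_.smul_apply,
      smul_eq_mul, RingHom.id_apply, mul_left_comm c]

theorem weightedJet_apply (k : ℕ) (h : 𝓢(E, ℂ)) (i : E × (l : Fin (k + 1)) × (Fin l → E)) :
    weightedJet k h i = (((1 + ‖i.1‖) ^ k / ∏ j, ‖i.2.2 j‖ : ℝ) : ℂ) *
      iteratedFDeriv ℝ i.2.1 h i.1 i.2.2 := rfl

theorem norm_weightedJet_le (k : ℕ) (h : 𝓢(E, ℂ)) :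
    ‖weightedJet k h‖ ≤ 2 ^ k * schwartzSup E k h :=
  lp.norm_le_of_forall_le (by positivity) fun i =>
    norm_weightedJet_aux_le (Nat.lt_succ_iff.1 i.2.1.2) h i.1 i.2.2

theorem schwartzSup_le_norm_weightedJet (k : ℕ) (h : 𝓢(E, ℂ)) :
    schwartzSup E k h ≤ ‖weightedJet k h‖ := by
  refine schwartzSup_le (norm_nonneg _) fun b hb x => ?_
  have hpos : 0 < (1 + ‖x‖) ^ k := by positivity
  rw [← le_div_iff₀' hpos]
  refine ContinuousMultilinearMap.opNorm_le_bound (by positivity) fun v => ?_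
  rcases (show 0 ≤ ∏ i, ‖v i‖ by positivity).eq_or_lt with h0 | h0
  · have := ContinuousMultilinearMap.le_opNorm (iteratedFDeriv ℝ b h x) v
    rwa [← h0, mul_zero] at this ⊢
  · have := lp.norm_apply_le_norm ENNReal.top_ne_zero (weightedJet k h)
      ⟨x, ⟨b, Nat.lt_succ_iff.2 hb⟩, v⟩
    rw [weightedJet_apply, norm_mul, Complex.norm_real, Real.norm_of_nonneg (by positivity)] at this
    rw [div_mul_eq_mul_div, le_div_iff₀' hpos, ← div_le_iff₀ h0, ← div_mul_eq_mul_div]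
    exact this

theorem exists_factor_weightedJet (L : 𝓢(E, ℂ) →L[ℂ] ℂ) :
    ∃ k, ∃ L' : WeightedJets E k →L[ℂ] ℂ, ∀ h, L' (weightedJet k h) = L h := by
  obtain ⟨k, C, hC0, hC⟩ := exists_norm_le_schwartzSup L
  have hinj : Function.Injective (weightedJet (E := E) k) := by
    refine (injective_iff_map_eq_zero _).2 fun h hh => eq_zero_of_schwartzSup_eq_zero (k := k) ?_
    have := schwartzSup_le_norm_weightedJet k h
    rw [hh, norm_zero] at this
    exact le_antisymm this (apply_nonneg _ _)
  let e := LinearEquiv.ofInjective (weightedJet (E := E) k) hinj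
  let f : LinearMap.range (weightedJet (E := E) k) →L[ℂ] ℂ :=
    (L.toLinearMap ∘ₗ e.symm.toLinearMap).mkContinuous C fun y => by
      obtain ⟨h, rfl⟩ := e.surjective y
      simp only [LinearMap.comp_apply, LinearEquiv.coe_coe, LinearEquiv.symm_apply_apply]
      exact (hC h).trans (mul_le_mul_of_nonneg_left (schwartzSup_le_norm_weightedJet k h) hC0)
  obtain ⟨g, hg, -⟩ := exists_extension_norm_eq _ f
  refine ⟨k, g, fun h => ?_⟩
  refine (hg (e h)).trans ?_
  simp [f]

theorem continuous_weightedJet_translate (k : ℕ) (h : 𝓢(E, ℂ)) :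
    Continuous fun a => weightedJet k (compSubConstCLM ℂ a h) := by
  refine continuous_iff_continuousAt.2 fun b => tendsto_iff_norm_sub_tendsto_zero.2 ?_
  set M := 2 ^ k * ((1 + ‖b‖) ^ k * (2 ^ k *
    (2 ^ k * (2 ^ (k + 1) * schwartzSup E (k + 1) h))))
  have hlim : Tendsto (fun a : E => M * ‖a - b‖) (𝓝 b) (𝓝 0) := by
    have : Continuous fun a : E => M * ‖a - b‖ := by fun_prop
    simpa using this.tendsto b
  refine squeeze_zero' (.of_forall fun _ => norm_nonneg _) ?_ hlim
  filter_upwards [Metric.ball_mem_nhds b one_pos] with a ha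
  have hab : ‖a - b‖ ≤ 1 := by simpa [dist_eq_norm] using (Metric.mem_ball.1 ha).le
  have h1 : compSubConstCLM ℂ a h - compSubConstCLM ℂ b h =
      compSubConstCLM ℂ b (compSubConstCLM ℂ (a - b) h - h) := by
    rw [map_sub, compSubConstCLM_comp, sub_add_cancel]
  rw [← map_sub, h1]
  refine (norm_weightedJet_le k _).trans ?_
  have h2 := schwartzSup_compSubConstCLM_le k (compSubConstCLM ℂ (a - b) h - h) b
  have h3 := schwartzSup_translate_sub_le k h hab
  calc _ ≤ 2 ^ k * ((1 + ‖b‖) ^ k * (2 ^ k * schwartzSup E k (compSubConstCLM ℂ (a - b) h - h))) :=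
        mul_le_mul_of_nonneg_left h2 (by positivity)
    _ ≤ 2 ^ k * ((1 + ‖b‖) ^ k * (2 ^ k *
        (2 ^ k * (2 ^ (k + 1) * schwartzSup E (k + 1) h) * ‖a - b‖))) := by
      refine mul_le_mul_of_nonneg_left (mul_le_mul_of_nonneg_left
        (mul_le_mul_of_nonneg_left h3 ?_) ?_) ?_ <;> positivity
    _ = M * ‖a - b‖ := by simp only [M]; ring

end Embedding

section AverageFunctional

variable {E : Type*} [NormedAddCommGroup E] [NormedSpace ℝ E] [FiniteDimensional ℝ E]
  [MeasureSpace E] [BorelSpace E] [(volume : Measure E).IsAddHaarMeasure]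

theorem integrable_smul_weightedJet (k : ℕ) (ρ h : 𝓢(E, ℂ)) (t : ℝ) :
    Integrable fun u => ρ u • weightedJet k (compSubConstCLM ℂ (t • u) h) := by
  refine ((integrable_schwartzMoment ρ k).mul_const
    (2 ^ k * ((1 + |t|) ^ k * (2 ^ k * schwartzSup E k h)))).mono'
    (ρ.continuous.smul ((continuous_weightedJet_translate k h).comp
      (continuous_const_smul t))).aestronglyMeasurable (.of_forall fun u => ?_)
  have h1 : 1 + ‖t • u‖ ≤ (1 + |t|) * (1 + ‖u‖) := by
    rw [norm_smul, Real.norm_eq_abs]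
    nlinarith [norm_nonneg u, abs_nonneg t]
  have h2 := (norm_weightedJet_le k _).trans (mul_le_mul_of_nonneg_left
    (schwartzSup_compSubConstCLM_le k h (t • u)) (by positivity : (0 : ℝ) ≤ 2 ^ k))
  rw [norm_smul]
  calc _ ≤ ‖ρ u‖ * (2 ^ k * ((1 + ‖t • u‖) ^ k * (2 ^ k * schwartzSup E k h))) :=
        mul_le_mul_of_nonneg_left h2 (norm_nonneg _)
    _ ≤ ‖ρ u‖ * (2 ^ k * (((1 + |t|) * (1 + ‖u‖)) ^ k * (2 ^ k * schwartzSup E k h))) := by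
        gcongr
    _ = _ := by rw [mul_pow]; ring

theorem integral_smul_weightedJet (k : ℕ) (ρ h : 𝓢(E, ℂ)) (t : ℝ) :
    ∫ u, ρ u • weightedJet k (compSubConstCLM ℂ (t • u) h) = weightedJet k (smear ρ t h) := by
  ext i
  let ev : WeightedJets E k →L[ℂ] ℂ := LinearMap.mkContinuous
    { toFun := fun y => y i
      map_add' := fun _ _ => rfl
      map_smul' := fun _ _ => rfl } 1
    (fun y => (lp.norm_apply_le_norm ENNReal.top_ne_zero y i).trans_eq (one_mul _).symm)
  refine (ev.integral_comp_comm (integrable_smul_weightedJet k ρ h t)).symm.trans ?_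
  rw [weightedJet_apply, iteratedFDeriv_smear,
    ContinuousMultilinearMap.integral_apply (integrable_smul_iteratedFDeriv ρ h t _ _),
    ← integral_const_mul]
  refine integral_congr_ae (.of_forall fun u => ?_)
  have h2 : ev (weightedJet k (compSubConstCLM ℂ (t • u) h)) =
      (((1 + ‖i.1‖) ^ k / ∏ j, ‖i.2.2 j‖ : ℝ) : ℂ) *
        iteratedFDeriv ℝ i.2.1 h (i.1 - t • u) i.2.2 := by
    rw [← iteratedFDeriv_compSubConstCLM]; rfl
  simp only [map_smul, h2, _root_.smul_apply, smul_eq_mul]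
  ring

/-- Continuous linear functionals commute with averaging. -/
theorem map_smear (L : 𝓢(E, ℂ) →L[ℂ] ℂ) (ρ h : 𝓢(E, ℂ)) (t : ℝ) :
    L (smear ρ t h) = ∫ u, ρ u * L (compSubConstCLM ℂ (t • u) h) := by
  obtain ⟨k, L', hL'⟩ := exists_factor_weightedJet L
  rw [← hL', ← integral_smul_weightedJet,
    ← L'.integral_comp_comm (integrable_smul_weightedJet k ρ h t)]
  simp [hL']

end AverageFunctional

section Mollification

variable {d : ℕ}

theorem eq_compSubConstCLM_of_scaled {ρ : (Fin d → ℝ) → ℂ} {t : ℝ}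
    {P : (Fin d → ℝ) → 𝓢(Fin d → ℝ, ℂ)} (hP : ∀ ξ w, P ξ w = scaled ρ t (ξ - w))
    (ξ : Fin d → ℝ) : P ξ = compSubConstCLM ℂ ξ (P 0) := by
  ext w
  rw [compSubConstCLM_apply, hP, hP]
  congr 1
  abel

theorem integral_mul_scaled {t : ℝ} (ht : 0 < t) (ρ f : (Fin d → ℝ) → ℂ) (v : Fin d → ℝ) :
    ∫ u, f u * scaled ρ t (u - v) = ∫ u, ρ u * f (v + t • u) := by
  rw [← integral_add_right_eq_self _ v]
  simp only [add_sub_cancel_right]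
  have h1 := Measure.integral_comp_smul (volume : Measure (Fin d → ℝ))
    (fun u => f (u + v) * scaled ρ t u) t
  have h2 : (t ^ Module.finrank ℝ (Fin d → ℝ)) • ∫ u : Fin d → ℝ, f (t • u + v) *
      scaled ρ t (t • u) = ∫ u, f (u + v) * scaled ρ t u := by
    rw [h1, abs_of_pos (by positivity), smul_inv_smul₀ (by positivity)]
  rw [← h2, ← integral_smul]
  refine integral_congr_ae (.of_forall fun u => ?_)
  simp only [scaled, inv_smul_smul₀ ht.ne', Module.finrank_fin_fun, zpow_neg, zpow_natCast,
    Complex.real_smul, add_comm v]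
  have : (t : ℂ) ≠ 0 := by exact_mod_cast ht.ne'
  push_cast
  field_simp

/-- Integrating a functional against translates of a mollifier amounts to averaging. -/
theorem integral_map_scaled_mul (L : 𝓢(Fin d → ℝ, ℂ) →L[ℂ] ℂ) (ρ f : 𝓢(Fin d → ℝ, ℂ)) {t : ℝ}
    (ht : 0 < t) {P : (Fin d → ℝ) → 𝓢(Fin d → ℝ, ℂ)}
    (hP : ∀ ξ w, P ξ w = scaled ρ t (ξ - w)) :
    ∫ ξ, L (P ξ) * f ξ = L (smear ρ (-t) f) := by
  have h1 : smear f 1 (P 0) = smear ρ (-t) f := by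
    ext v
    rw [smear_apply, smear_apply]
    simp only [smul_eq_mul, one_smul, hP, neg_smul, sub_neg_eq_add]
    rw [← integral_mul_scaled ht]
    simp
  rw [← h1, map_smear]
  refine integral_congr_ae (.of_forall fun ξ => ?_)
  simp only [one_smul, ← eq_compSubConstCLM_of_scaled hP, mul_comm]

theorem integral_map_scaled_sub_mul (L : 𝓢(Fin d → ℝ, ℂ) →L[ℂ] ℂ) (ρ : 𝓢(Fin d → ℝ, ℂ))
    {t ε : ℝ} (ht : 0 < t) {P R : (Fin d → ℝ) → 𝓢(Fin d → ℝ, ℂ)}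
    (hP : ∀ ξ w, P ξ w = scaled ρ t (ξ - w)) (hR : ∀ ξ w, R ξ w = scaled ρ ε (ξ - w))
    (x : Fin d → ℝ) :
    ∫ u, L (P (x - u)) * scaled ρ ε u = L (compSubConstCLM ℂ x (smear ρ (-t) (R 0))) := by
  rw [← smear_compSubConstCLM, ← eq_compSubConstCLM_of_scaled hR,
    ← integral_map_scaled_mul L ρ (R x) ht hP, ← integral_sub_left_eq_self _ _ x]
  simp [hR]

end Mollification

section Kernel

variable {E F : Type*} [NormedAddCommGroup E] [NormedSpace ℝ E] [FiniteDimensional ℝ E]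
  [NormedAddCommGroup F] [NormedSpace ℝ F] [FiniteDimensional ℝ F]

/-- The values of a bilinear form on the translates of a pair of Schwartz functions. -/
noncomputable def translationKernel {E F : Type*} [NormedAddCommGroup E] [NormedSpace ℝ E]
    [NormedAddCommGroup F] [NormedSpace ℝ F] (Λ : 𝓢(F, ℂ) →L[ℂ] (𝓢(E, ℂ) →L[ℂ] ℂ))
    (ψ : 𝓢(F, ℂ)) (γ : 𝓢(E, ℂ)) (z : E × F) : ℂ :=
  Λ (compSubConstCLM ℂ z.2 ψ) (compSubConstCLM ℂ z.1 γ)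

theorem lineDerivOp_compSubConstCLM {E : Type*} [NormedAddCommGroup E] [NormedSpace ℝ E]
    (h : 𝓢(E, ℂ)) (a b : E) :
    ∂_{a} (compSubConstCLM ℂ b h) = compSubConstCLM ℂ b (∂_{a} h : 𝓢(E, ℂ)) := by
  ext x
  rw [compSubConstCLM_apply, lineDerivOp_apply_eq_fderiv, lineDerivOp_apply_eq_fderiv]
  have : ⇑(compSubConstCLM ℂ b h) = fun x => h (x - b) := rfl
  rw [this, fderiv_comp_sub]

/-- The differential of `translationKernel`. -/
noncomputable def translationKernelFDeriv (Λ : 𝓢(F, ℂ) →L[ℂ] (𝓢(E, ℂ) →L[ℂ] ℂ))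
    (ψ : 𝓢(F, ℂ)) (γ : 𝓢(E, ℂ)) (z : E × F) : E × F →L[ℝ] ℂ :=
  LinearMap.toContinuousLinearMap
    { toFun := fun w => -translationKernel Λ ψ (∂_{w.1} γ) z - translationKernel Λ (∂_{w.2} ψ) γ z
      map_add' := fun v w => by
        simp only [translationKernel, Prod.fst_add, Prod.snd_add,
          LineDeriv.lineDerivOp_left_add, map_add, _root_.add_apply]
        ring
      map_smul' := fun r w => by
        simp only [translationKernel, Prod.smul_fst, Prod.smul_snd, RingHom.id_apply,
          LineDeriv.lineDerivOp_left_smul, ContinuousLinearMap.map_smul_of_tower,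
          _root_.smul_apply, smul_sub, smul_neg] }

theorem translationKernelFDeriv_apply (Λ : 𝓢(F, ℂ) →L[ℂ] (𝓢(E, ℂ) →L[ℂ] ℂ))
    (ψ : 𝓢(F, ℂ)) (γ : 𝓢(E, ℂ)) (z w : E × F) :
    translationKernelFDeriv Λ ψ γ z w =
      -translationKernel Λ ψ (∂_{w.1} γ) z - translationKernel Λ (∂_{w.2} ψ) γ z := rfl

theorem hasFDerivAt_translationKernel (Λ : 𝓢(F, ℂ) →L[ℂ] (𝓢(E, ℂ) →L[ℂ] ℂ))
    (ψ : 𝓢(F, ℂ)) (γ : 𝓢(E, ℂ)) (z : E × F) :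
    HasFDerivAt (translationKernel Λ ψ γ) (translationKernelFDeriv Λ ψ γ z) z := by
  obtain ⟨k, C, hC0, hC⟩ := exists_joint_bound Λ
  rw [hasFDerivAt_iff_isLittleO_nhds_zero]
  refine Asymptotics.IsBigO.trans_isLittleO ?_ (Asymptotics.isLittleO_norm_pow_id one_lt_two)
  set ψ' := compSubConstCLM ℂ z.2 ψ with hψ'
  set γ' := compSubConstCLM ℂ z.1 γ with hγ'
  set Mψ := 2 ^ k * (2 ^ (k + 1) * schwartzSup F (k + 1) ψ')
  set Mγ := 2 ^ k * (2 ^ (k + 1) * schwartzSup E (k + 1) γ')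
  set Nψ := 2 ^ k * (2 ^ (k + 2) * schwartzSup F (k + 2) ψ')
  set Nγ := 2 ^ k * (2 ^ (k + 2) * schwartzSup E (k + 2) γ')
  have hMψ : 0 ≤ Mψ := by positivity
  have hMγ : 0 ≤ Mγ := by positivity
  have hNψ : 0 ≤ Nψ := by positivity
  have hNγ : 0 ≤ Nγ := by positivity
  have hQψ : 0 ≤ schwartzSup F k ψ' := by positivity
  have hQγ : 0 ≤ schwartzSup E k γ' := by positivity
  refine Asymptotics.IsBigO.of_bound
    (C * Mψ * Mγ + C * schwartzSup F k ψ' * Nγ + C * Nψ * schwartzSup E k γ') ?_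
  filter_upwards [Metric.ball_mem_nhds (0 : E × F) one_pos] with w hw
  have hw1 : ‖w‖ ≤ 1 := (mem_ball_zero_iff.1 hw).le
  have ha : ‖w.1‖ ≤ ‖w‖ := norm_fst_le w
  have hb : ‖w.2‖ ≤ ‖w‖ := norm_snd_le w
  have hid : translationKernel Λ ψ γ (z + w) - translationKernel Λ ψ γ z -
      translationKernelFDeriv Λ ψ γ z w =
      Λ (compSubConstCLM ℂ w.2 ψ' - ψ') (compSubConstCLM ℂ w.1 γ' - γ') +
      Λ ψ' (compSubConstCLM ℂ w.1 γ' - γ' + ∂_{w.1} γ') +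
      Λ (compSubConstCLM ℂ w.2 ψ' - ψ' + ∂_{w.2} ψ') γ' := by
    rw [translationKernelFDeriv_apply]
    simp only [translationKernel, hψ', hγ', lineDerivOp_compSubConstCLM, compSubConstCLM_comp,
      Prod.fst_add, Prod.snd_add, map_add, map_sub, _root_.add_apply, _root_.sub_apply]
    ring
  have e1 : ‖Λ (compSubConstCLM ℂ w.2 ψ' - ψ') (compSubConstCLM ℂ w.1 γ' - γ')‖ ≤
      C * (Mψ * ‖w‖) * (Mγ * ‖w‖) := by
    refine (hC _ _).trans ?_
    have i1 := (schwartzSup_translate_sub_le k ψ' (hb.trans hw1)).trans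
      (mul_le_mul_of_nonneg_left hb hMψ)
    have i2 := (schwartzSup_translate_sub_le k γ' (ha.trans hw1)).trans
      (mul_le_mul_of_nonneg_left ha hMγ)
    exact mul_le_mul (mul_le_mul_of_nonneg_left i1 hC0) i2 (by positivity) (by positivity)
  have e2 : ‖Λ ψ' (compSubConstCLM ℂ w.1 γ' - γ' + ∂_{w.1} γ')‖ ≤
      C * schwartzSup F k ψ' * (Nγ * ‖w‖ * ‖w‖) := by
    refine (hC _ _).trans (mul_le_mul_of_nonneg_left ?_ (by positivity))
    exact (schwartzSup_translate_sub_add_le k γ' (ha.trans hw1)).trans (by gcongr)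
  have e3 : ‖Λ (compSubConstCLM ℂ w.2 ψ' - ψ' + ∂_{w.2} ψ') γ'‖ ≤
      C * (Nψ * ‖w‖ * ‖w‖) * schwartzSup E k γ' := by
    refine (hC _ _).trans (mul_le_mul_of_nonneg_right (mul_le_mul_of_nonneg_left ?_ hC0) hQγ)
    exact (schwartzSup_translate_sub_add_le k ψ' (hb.trans hw1)).trans (by gcongr)
  rw [hid, Real.norm_of_nonneg (by positivity)]
  refine (norm_add₃_le).trans ((add_le_add (add_le_add e1 e2) e3).trans_eq ?_)
  ring

theorem fderiv_translationKernel_apply (Λ : 𝓢(F, ℂ) →L[ℂ] (𝓢(E, ℂ) →L[ℂ] ℂ))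
    (ψ : 𝓢(F, ℂ)) (γ : 𝓢(E, ℂ)) (z w : E × F) :
    fderiv ℝ (translationKernel Λ ψ γ) z w =
      -translationKernel Λ ψ (∂_{w.1} γ) z - translationKernel Λ (∂_{w.2} ψ) γ z := by
  rw [(hasFDerivAt_translationKernel Λ ψ γ z).fderiv, translationKernelFDeriv_apply]

theorem contDiff_translationKernel (Λ : 𝓢(F, ℂ) →L[ℂ] (𝓢(E, ℂ) →L[ℂ] ℂ))
    (ψ : 𝓢(F, ℂ)) (γ : 𝓢(E, ℂ)) : ContDiff ℝ ∞ (translationKernel Λ ψ γ) := by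
  refine contDiff_infty.2 fun j => ?_
  induction j generalizing ψ γ with
  | zero =>
    exact contDiff_zero.2 (continuous_iff_continuousAt.2 fun z =>
      (hasFDerivAt_translationKernel Λ ψ γ z).continuousAt)
  | succ j ih =>
    refine contDiff_succ_iff_fderiv_apply.2
      ⟨fun z => (hasFDerivAt_translationKernel Λ ψ γ z).differentiableAt,
        fun h => absurd h (WithTop.natCast_ne_top j), fun w => ?_⟩
    simp only [fderiv_translationKernel_apply]
    exact (ih _ _).neg.sub (ih _ _)

theorem norm_iteratedFDeriv_translationKernel_le (Λ : 𝓢(F, ℂ) →L[ℂ] (𝓢(E, ℂ) →L[ℂ] ℂ)) :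
    ∃ k, ∀ l, ∃ C ≥ 0, ∀ ψ γ z, ‖iteratedFDeriv ℝ l (translationKernel Λ ψ γ) z‖ ≤
      C * (1 + ‖z‖) ^ (2 * k) * schwartzSup F (k + l) ψ * schwartzSup E (k + l) γ := by
  obtain ⟨k, C, hC0, hC⟩ := exists_joint_bound Λ
  refine ⟨k, fun l => ?_⟩
  induction l with
  | zero =>
    refine ⟨C * 2 ^ k * 2 ^ k, by positivity, fun ψ γ z => ?_⟩
    rw [norm_iteratedFDeriv_zero]
    have h1 := schwartzSup_compSubConstCLM_le k ψ z.2
    have h2 := schwartzSup_compSubConstCLM_le k γ z.1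
    have hw1 : (1 + ‖z.1‖) ^ k ≤ (1 + ‖z‖) ^ k := by gcongr; exact norm_fst_le z
    have hw2 : (1 + ‖z.2‖) ^ k ≤ (1 + ‖z‖) ^ k := by gcongr; exact norm_snd_le z
    have h1' := h1.trans (mul_le_mul_of_nonneg_right hw2 (by positivity))
    have h2' := h2.trans (mul_le_mul_of_nonneg_right hw1 (by positivity))
    refine (hC _ _).trans ((mul_le_mul (mul_le_mul_of_nonneg_left h1' hC0) h2'
      (by positivity) (by positivity)).trans_eq ?_)
    simp only [add_zero]
    ring
  | succ l ih =>
    obtain ⟨C, hC0, hC⟩ := ih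
    refine ⟨2 * (C * 2 ^ (k + l + 1)), by positivity, fun ψ γ z => ?_⟩
    refine ContinuousMultilinearMap.opNorm_le_bound (by positivity) fun v => ?_
    set w := v (Fin.last l)
    set W := (1 + ‖z‖) ^ (2 * k)
    have hsm : ∀ ψ γ, ContDiff ℝ l (translationKernel Λ ψ γ) := fun ψ γ =>
      contDiff_infty.1 (contDiff_translationKernel Λ ψ γ) l
    have hfd : ContDiff ℝ l (fderiv ℝ (translationKernel Λ ψ γ)) :=
      (contDiff_infty.1 (contDiff_translationKernel Λ ψ γ) (l + 1)).fderiv_right (by norm_cast)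
    have hstep : iteratedFDeriv ℝ (l + 1) (translationKernel Λ ψ γ) z v =
        -iteratedFDeriv ℝ l (translationKernel Λ ψ (∂_{w.1} γ)) z (Fin.init v) -
          iteratedFDeriv ℝ l (translationKernel Λ (∂_{w.2} ψ) γ) z (Fin.init v) := by
      have hneg : ContDiffAt ℝ l (-translationKernel Λ ψ (∂_{w.1} γ)) z := (hsm _ _).neg.contDiffAt
      rw [iteratedFDeriv_succ_apply_right, ← iteratedFDeriv_clm_apply_const_apply hfd le_rfl]
      simp only [fderiv_translationKernel_apply]
      rw [show (fun y => -translationKernel Λ ψ (∂_{w.1} γ) y -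
          translationKernel Λ (∂_{w.2} ψ) γ y) = -translationKernel Λ ψ (∂_{w.1} γ) -
          translationKernel Λ (∂_{w.2} ψ) γ from rfl,
        iteratedFDeriv_sub_apply hneg (hsm _ _).contDiffAt,
        iteratedFDeriv_neg_apply]
      rfl
    have hγ := (schwartzSup_lineDerivOp_le (k + l) γ w.1).trans
      (mul_le_mul_of_nonneg_left (norm_fst_le w) (by positivity))
    have hψ := (schwartzSup_lineDerivOp_le (k + l) ψ w.2).trans
      (mul_le_mul_of_nonneg_left (norm_snd_le w) (by positivity))
    have mψ := schwartzSup_mono (Nat.le_succ (k + l)) ψ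
    have mγ := schwartzSup_mono (Nat.le_succ (k + l)) γ
    set qψ := schwartzSup F (k + l + 1) ψ
    set qγ := schwartzSup E (k + l + 1) γ
    have hqψ : 0 ≤ qψ := by positivity
    have hqγ : 0 ≤ qγ := by positivity
    set p := ∏ i, ‖Fin.init v i‖
    have b1 : ‖iteratedFDeriv ℝ l (translationKernel Λ ψ (∂_{w.1} γ)) z (Fin.init v)‖ ≤
        C * W * qψ * (2 ^ (k + l + 1) * qγ * ‖w‖) * p := by
      refine (ContinuousMultilinearMap.le_opNorm _ _).trans
        (mul_le_mul_of_nonneg_right ((hC _ _ z).trans ?_) (by positivity))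
      exact mul_le_mul (mul_le_mul_of_nonneg_left mψ (by positivity)) hγ (by positivity)
        (by positivity)
    have b2 : ‖iteratedFDeriv ℝ l (translationKernel Λ (∂_{w.2} ψ) γ) z (Fin.init v)‖ ≤
        C * W * (2 ^ (k + l + 1) * qψ * ‖w‖) * qγ * p := by
      refine (ContinuousMultilinearMap.le_opNorm _ _).trans
        (mul_le_mul_of_nonneg_right ((hC _ _ z).trans ?_) (by positivity))
      exact mul_le_mul (mul_le_mul_of_nonneg_left hψ (by positivity)) mγ (by positivity)
        (by positivity)
    rw [hstep, Fin.prod_univ_castSucc]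
    refine (norm_sub_le _ _).trans ?_
    rw [norm_neg]
    refine (add_le_add b1 b2).trans_eq ?_
    change _ = 2 * (C * 2 ^ (k + l + 1)) * W * qψ * qγ * (p * ‖w‖)
    ring

end Kernel

section Asymptotics

theorem hasDerivAt_integral_smul {E F : Type*} [NormedAddCommGroup E] [NormedSpace ℝ E]
    [FiniteDimensional ℝ E] [MeasureSpace E] [BorelSpace E]
    [(volume : Measure E).IsAddHaarMeasure] [NormedAddCommGroup F] [NormedSpace ℝ F]
    [NormedSpace ℂ F] [SMulCommClass ℝ ℂ F] [IsScalarTower ℝ ℂ F] (ρ : 𝓢(E, ℂ)) {G : E → F}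
    (hG : ContDiff ℝ 1 G) {C C' : ℝ} (hC : ∀ x, ‖G x‖ ≤ C) (hC' : ∀ x, ‖fderiv ℝ G x‖ ≤ C')
    (x : E) (t : ℝ) :
    HasDerivAt (fun t : ℝ => ∫ u, ρ u • G (x - t • u))
      (∫ u, ρ u • -fderiv ℝ G (x - t • u) u) t := by
  have hI : ∀ t : ℝ, Integrable (fun u => ρ u • G (x - t • u)) := fun t =>
    integrable_smul_of_bounded ρ (hG.continuous.comp (by fun_prop)) fun u => hC _
  refine (hasDerivAt_integral_of_dominated_loc_of_deriv_le (s := Set.univ)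
    (F := fun (t : ℝ) u => ρ u • G (x - t • u))
    (F' := fun t u => ρ u • -fderiv ℝ G (x - t • u) u)
    (bound := fun u => C' * ((1 + ‖u‖) ^ 1 * ‖ρ u‖)) univ_mem
    (.of_forall fun t => (hI t).aestronglyMeasurable) (hI t) ?_
    (.of_forall fun u t _ => ?_) ((integrable_schwartzMoment ρ 1).const_mul _)
    (.of_forall fun u t _ => ?_)).2
  · have := hG.continuous_fderiv one_ne_zero
    have h2 : Continuous fun u => fderiv ℝ G (x - t • u) u :=
      (this.comp (by fun_prop : Continuous fun u : E => x - t • u)).clm_apply continuous_id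
    exact (ρ.continuous.smul h2.neg).aestronglyMeasurable
  · rw [norm_smul, norm_neg, pow_one]
    have h0 : 0 ≤ C' := (norm_nonneg _).trans (hC' x)
    have h1 : ‖fderiv ℝ G (x - t • u) u‖ ≤ C' * (1 + ‖u‖) :=
      ((fderiv ℝ G (x - t • u)).le_of_opNorm_le (hC' _) u).trans
        (mul_le_mul_of_nonneg_left (by linarith) h0)
    exact (mul_le_mul_of_nonneg_left h1 (norm_nonneg _)).trans_eq (by ring)
  · have h1 : HasDerivAt (fun t : ℝ => x - t • u) (-u) t := by
      simpa using ((hasDerivAt_id t).smul_const u).const_sub x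
    have h2 := ((hG.differentiable one_ne_zero (x - t • u)).hasFDerivAt.comp_hasDerivAt t
      h1).const_smul (ρ u)
    rwa [map_neg] at h2

variable {d : ℕ}

/-- Multiplication of a Schwartz function by a coordinate. -/
noncomputable def coordMul (i : Fin d) : 𝓢(Fin d → ℝ, ℂ) →L[ℂ] 𝓢(Fin d → ℝ, ℂ) :=
  smulLeftCLM ℂ (fun u : Fin d → ℝ => (u i : ℂ))

theorem coordMul_apply (i : Fin d) (ρ : 𝓢(Fin d → ℝ, ℂ)) (u : Fin d → ℝ) :
    coordMul i ρ u = u i * ρ u := by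
  rw [coordMul, smulLeftCLM_apply_apply]
  · simp
  · exact (Complex.ofRealCLM.comp (ContinuousLinearMap.proj (R := ℝ) (φ := fun _ : Fin d => ℝ)
      i)).hasTemperateGrowth

theorem smul_clm_apply_eq_sum {F : Type*} [NormedAddCommGroup F] [NormedSpace ℝ F]
    [NormedSpace ℂ F] [IsScalarTower ℝ ℂ F] (A : (Fin d → ℝ) →L[ℝ] F) (c : ℂ) (u : Fin d → ℝ) :
    c • A u = ∑ i, ((u i : ℂ) * c) • A (Pi.single i 1) := by
  conv_lhs => rw [pi_eq_sum_univ' u, map_sum, Finset.smul_sum]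
  refine Finset.sum_congr rfl fun i _ => ?_
  rw [map_smul, mul_comm, mul_smul]
  congr 1
  exact (RCLike.real_smul_eq_coe_smul (K := ℂ) _ _)

theorem hasDerivAt_iteratedFDeriv_smear (ρ h : 𝓢(Fin d → ℝ, ℂ)) (l : ℕ) (x : Fin d → ℝ)
    (t : ℝ) :
    HasDerivAt (fun t => iteratedFDeriv ℝ l (smear ρ t h) x)
      (-∑ i, iteratedFDeriv ℝ l (smear (coordMul i ρ) t (∂_{(Pi.single i 1 : Fin d → ℝ)} h)) x) t := by
  have hder := hasDerivAt_integral_smul ρ (contDiff_iteratedFDeriv h l 1)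
    (norm_iteratedFDeriv_le_schwartzSup h l)
    (norm_fderiv_iteratedFDeriv_le_schwartzSup h l) x t
  simp only [iteratedFDeriv_smear]
  refine hder.congr_deriv (Eq.symm ?_)
  rw [← integral_finsetSum _ fun i _ => integrable_smul_iteratedFDeriv _ _ _ _ _, ← integral_neg]
  refine integral_congr_ae (.of_forall fun u => ?_)
  simp only [iteratedFDeriv_lineDerivOp, coordMul_apply, smul_neg, neg_inj]
  rw [smul_clm_apply_eq_sum]

theorem schwartzSup_smear_sub_le (ρ h : 𝓢(Fin d → ℝ, ℂ)) {C : ℝ} {k p : ℕ}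
    (hC : ∀ i t, |t| ≤ 1 → schwartzSup (Fin d → ℝ) k
      (smear (coordMul i ρ) t (∂_{(Pi.single i 1 : Fin d → ℝ)} h)) ≤ C * |t| ^ p)
    {t : ℝ} (ht : |t| ≤ 1) (hC0 : 0 ≤ C) :
    schwartzSup (Fin d → ℝ) k (smear ρ t h - (∫ u, ρ u) • h) ≤
      d * 2 ^ k * C * |t| ^ (p + 1) := by
  refine schwartzSup_le (by positivity) fun b hb x => ?_
  have hpos : 0 < (1 + ‖x‖) ^ k := by positivity
  have h0 : iteratedFDeriv ℝ b (smear ρ t h - (∫ u, ρ u) • h : 𝓢(Fin d → ℝ, ℂ)) x =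
      iteratedFDeriv ℝ b (smear ρ t h) x - iteratedFDeriv ℝ b (smear ρ 0 h) x := by
    have e : (smear ρ 0 h : 𝓢(Fin d → ℝ, ℂ)) = (∫ u, ρ u) • h := by
      ext y
      simp [smear_apply, integral_mul_const]
    rw [e]
    exact iteratedFDeriv_sub_apply ((smear ρ t h).smooth b).contDiffAt
      (((∫ u, ρ u) • h).smooth b).contDiffAt
  have h1 := (convex_closedBall (0 : ℝ) |t|).norm_image_sub_le_of_norm_hasDerivWithin_le
    (C := d * (2 ^ k * (C * |t| ^ p)) / (1 + ‖x‖) ^ k)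
    (fun τ _ => (hasDerivAt_iteratedFDeriv_smear ρ h b x τ).hasDerivWithinAt)
    (fun τ hτ => ?_) (by simp : (0 : ℝ) ∈ Metric.closedBall 0 |t|)
    (by simp : t ∈ Metric.closedBall 0 |t|)
  · rw [h0]
    refine (mul_le_mul_of_nonneg_left h1 hpos.le).trans_eq ?_
    rw [sub_zero, Real.norm_eq_abs]
    rw [pow_succ]
    field_simp
  · have hτ' : |τ| ≤ |t| := by simpa using hτ
    rw [norm_neg, le_div_iff₀' hpos]
    refine (mul_le_mul_of_nonneg_left (norm_sum_le _ _) hpos.le).trans ?_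
    rw [Finset.mul_sum]
    refine (Finset.sum_le_card_nsmul _ _ (2 ^ k * (C * |t| ^ p)) fun i _ => ?_).trans_eq (by simp)
    refine (weight_mul_le_schwartzSup le_rfl hb _ x).trans
      (mul_le_mul_of_nonneg_left ((hC i τ (hτ'.trans ht)).trans ?_) (by positivity))
    gcongr

theorem moment_coordMul (ρ : 𝓢(Fin d → ℝ, ℂ)) (i : Fin d) (α : Fin d → ℕ) :
    ∫ x, (∏ j, (x j : ℂ) ^ α j) * coordMul i ρ x =
      ∫ x, (∏ j, (x j : ℂ) ^ (α + Pi.single i 1 : Fin d → ℕ) j) * ρ x := by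
  refine integral_congr_ae (.of_forall fun x => ?_)
  have : ∏ j, (x j : ℂ) ^ (Pi.single i 1 : Fin d → ℕ) j = x i := by
    rw [Finset.prod_eq_single i] <;> simp +contextual
  simp only [coordMul_apply, Pi.add_apply, pow_add, Finset.prod_mul_distrib, this, mul_assoc]

theorem exists_schwartzSup_smear_le {ρ : 𝓢(Fin d → ℝ, ℂ)}
    (hρ : ∀ α : Fin d → ℕ, ∫ x, (∏ j, (x j : ℂ) ^ α j) * ρ x = 0) (h : 𝓢(Fin d → ℝ, ℂ))
    (k p : ℕ) :
    ∃ C ≥ 0, ∀ t : ℝ, |t| ≤ 1 → schwartzSup (Fin d → ℝ) k (smear ρ t h) ≤ C * |t| ^ p := by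
  induction p generalizing ρ h with
  | zero =>
    have := schwartzMoment_nonneg ρ k
    exact ⟨2 ^ k * schwartzMoment ρ k * 2 ^ k * schwartzSup _ k h, by positivity,
      fun t ht => by simpa using schwartzSup_smear_le ρ h ht k⟩
  | succ p ih =>
    choose C hC0 hC using fun i => ih (ρ := coordMul i ρ)
      (fun α => (moment_coordMul ρ i α).trans (hρ _)) (∂_{(Pi.single i 1 : Fin d → ℝ)} h)
    have hle : ∀ i, C i ≤ ∑ i, C i := fun i =>
      Finset.single_le_sum (fun j _ => hC0 j) (Finset.mem_univ i)
    have hsum : 0 ≤ ∑ i, C i := Finset.sum_nonneg fun i _ => hC0 i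
    refine ⟨d * 2 ^ k * ∑ i, C i, by positivity, fun t ht => ?_⟩
    have := schwartzSup_smear_sub_le ρ h (fun i t ht => (hC i t ht).trans
      (mul_le_mul_of_nonneg_right (hle i) (by positivity))) ht hsum
    rwa [show ∫ u, ρ u = 0 by simpa using hρ 0, zero_smul, sub_zero] at this

theorem exists_schwartzSup_smear_sub_le {ρ : 𝓢(Fin d → ℝ, ℂ)} (hρ : IsMollifier ρ)
    (h : 𝓢(Fin d → ℝ, ℂ)) (k p : ℕ) :
    ∃ C ≥ 0, ∀ t : ℝ, |t| ≤ 1 →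
      schwartzSup (Fin d → ℝ) k (smear ρ t h - h) ≤ C * |t| ^ p := by
  choose C hC0 hC using fun i => exists_schwartzSup_smear_le (ρ := coordMul i ρ)
    (fun α => (moment_coordMul ρ i α).trans (hρ.2 _ fun h0 => by
      simpa using congrFun h0 i)) (∂_{(Pi.single i 1 : Fin d → ℝ)} h) k p
  have hle : ∀ i, C i ≤ ∑ i, C i := fun i =>
    Finset.single_le_sum (fun j _ => hC0 j) (Finset.mem_univ i)
  have hsum : 0 ≤ ∑ i, C i := Finset.sum_nonneg fun i _ => hC0 i
  refine ⟨d * 2 ^ k * ∑ i, C i, by positivity, fun t ht => ?_⟩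
  have := schwartzSup_smear_sub_le ρ h (fun i t ht => (hC i t ht).trans
    (mul_le_mul_of_nonneg_right (hle i) (by positivity))) ht hsum
  rw [hρ.1, one_smul] at this
  exact this.trans (mul_le_mul_of_nonneg_left
    (pow_le_pow_of_le_one (abs_nonneg t) ht (Nat.le_succ p)) (by positivity))

end Asymptotics

section Net

theorem isEtauNet_of_mu_le {E : Type*} [NormedAddCommGroup E] [NormedSpace ℝ E] {f : ℝ → E → ℂ}
    (hf : ∀ ε ∈ Set.Ioc (0 : ℝ) 1, ContDiff ℝ ∞ (f ε)) (q : ℕ)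
    (h : ∀ l, ∃ C ≥ 0, ∃ N : ℕ, ∀ ε ∈ Set.Ioc (0 : ℝ) 1,
      mu (-(q : ℤ)) l (f ε) ≤ ENNReal.ofReal (C * ε ^ (-(N : ℤ)))) : IsEtauNet f := by
  refine ⟨fun ε hε => ⟨hf ε hε, fun l => ⟨q, ?_⟩⟩, fun l => ⟨q, ?_⟩⟩
  · obtain ⟨C, -, N, hC⟩ := h l
    exact (hC ε hε).trans_lt ENNReal.ofReal_lt_top
  · obtain ⟨C, hC0, N, hC⟩ := h l
    refine ⟨N, C + 1, by positivity, 1, one_pos, fun ε hε hε1 => (hC ε ⟨hε, hε1⟩).trans ?_⟩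
    refine ENNReal.ofReal_le_ofReal (mul_le_mul_of_nonneg_right (by linarith) (by positivity))

theorem isEtauNet_of_eq_translationKernel {E F : Type*} [NormedAddCommGroup E] [NormedSpace ℝ E]
    [FiniteDimensional ℝ E] [NormedAddCommGroup F] [NormedSpace ℝ F] [FiniteDimensional ℝ F]
    (Λ : 𝓢(F, ℂ) →L[ℂ] (𝓢(E, ℂ) →L[ℂ] ℂ)) {ψ : ℝ → 𝓢(F, ℂ)} {γ : ℝ → 𝓢(E, ℂ)}
    {H : ℝ → E × F → ℂ}
    (hH : ∀ ε ∈ Set.Ioc (0 : ℝ) 1, H ε = translationKernel Λ (ψ ε) (γ ε))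
    (hψ : ∀ k, ∃ C ≥ 0, ∃ N : ℕ, ∀ ε ∈ Set.Ioc (0 : ℝ) 1,
      schwartzSup F k (ψ ε) ≤ C * ε ^ (-(N : ℤ)))
    (hγ : ∀ k, ∃ C ≥ 0, ∃ N : ℕ, ∀ ε ∈ Set.Ioc (0 : ℝ) 1,
      schwartzSup E k (γ ε) ≤ C * ε ^ (-(N : ℤ))) : IsEtauNet H := by
  obtain ⟨k, hk⟩ := norm_iteratedFDeriv_translationKernel_le Λ
  choose C hC0 hC using hk
  refine isEtauNet_of_mu_le (fun ε hε => hH ε hε ▸ contDiff_translationKernel Λ _ _) (2 * k)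
    fun l => ?_
  obtain ⟨A, hA0, M, hA⟩ := hψ (k + l)
  obtain ⟨B, hB0, N, hB⟩ := hγ (k + l)
  set S := ∑ i ∈ Finset.range (l + 1), C i
  have hS0 : 0 ≤ S := Finset.sum_nonneg fun i _ => hC0 i
  refine ⟨S * A * B, by positivity, M + N, fun ε hε => ?_⟩
  refine iSup_le fun z => iSup_le fun i => iSup_le fun hi => ENNReal.ofReal_le_ofReal ?_
  have hCS : C i ≤ S := Finset.single_le_sum (f := C) (fun j _ => hC0 j)
    (Finset.mem_range.2 (Nat.lt_succ_of_le hi))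
  have hψ' := (schwartzSup_mono (Nat.add_le_add_left hi k) (ψ ε)).trans (hA ε hε)
  have hγ' := (schwartzSup_mono (Nat.add_le_add_left hi k) (γ ε)).trans (hB ε hε)
  have hε0 := hε.1
  have hpos : 0 < (1 + ‖z‖) ^ (2 * k) := by positivity
  rw [hH ε hε, zpow_neg, zpow_natCast, inv_mul_le_iff₀ hpos]
  refine (hC i (ψ ε) (γ ε) z).trans ((mul_le_mul (mul_le_mul
    (mul_le_mul_of_nonneg_right hCS hpos.le) hψ' (by positivity) (by positivity)) hγ'
    (by positivity) (by positivity)).trans_eq ?_)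
  rw [Nat.cast_add, neg_add, zpow_add₀ hε0.ne']
  ring

theorem exists_schwartzSup_scaled_le {d : ℕ} (ρ : 𝓢(Fin d → ℝ, ℂ)) (k : ℕ) :
    ∃ C ≥ 0, ∃ N : ℕ, ∀ ε ∈ Set.Ioc (0 : ℝ) 1, ∀ P : 𝓢(Fin d → ℝ, ℂ),
      (∀ w, P w = scaled ρ ε (0 - w)) → schwartzSup (Fin d → ℝ) k P ≤ C * ε ^ (-(N : ℤ)) := by
  refine ⟨2 ^ k * schwartzSup (Fin d → ℝ) k ρ, by positivity, d + k, fun ε hε P hP => ?_⟩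
  obtain ⟨hε0, hε1⟩ := hε
  refine schwartzSup_le (by positivity) fun b hb x => ?_
  have hPeq : ⇑P = ((ε ^ (-(d : ℤ)) : ℝ) : ℂ) • fun z => ρ ((-ε⁻¹) • z) := by
    ext z
    simp [hP, scaled]
  have hinv : 1 ≤ ε⁻¹ := (one_le_inv₀ hε0).2 hε1
  have hD : ‖iteratedFDeriv ℝ b P x‖ =
      ε ^ (-(d : ℤ)) * (ε⁻¹ ^ b * ‖iteratedFDeriv ℝ b ρ ((-ε⁻¹) • x)‖) := by
    have hsm : ContDiffAt ℝ b (fun z => ρ ((-ε⁻¹) • z)) x :=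
      ((ρ.smooth b).comp (contDiff_const_smul (-ε⁻¹))).contDiffAt
    rw [hPeq, iteratedFDeriv_const_smul_apply hsm,
      iteratedFDeriv_comp_const_smul _ (ρ.smooth b), norm_smul, norm_smul, norm_pow, norm_neg,
      Complex.norm_real, Real.norm_of_nonneg (by positivity), Real.norm_of_nonneg (by positivity)]
  have hx : 1 + ‖x‖ ≤ 1 + ‖(-ε⁻¹) • x‖ := by
    rw [norm_smul, norm_neg, Real.norm_of_nonneg (by positivity)]
    nlinarith [norm_nonneg x]
  rw [hD]
  calc (1 + ‖x‖) ^ k * (ε ^ (-(d : ℤ)) * (ε⁻¹ ^ b * ‖iteratedFDeriv ℝ b ρ ((-ε⁻¹) • x)‖))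
      ≤ (1 + ‖(-ε⁻¹) • x‖) ^ k *
        (ε ^ (-(d : ℤ)) * (ε⁻¹ ^ k * ‖iteratedFDeriv ℝ b ρ ((-ε⁻¹) • x)‖)) := by gcongr
    _ = ((1 + ‖(-ε⁻¹) • x‖) ^ k * ‖iteratedFDeriv ℝ b ρ ((-ε⁻¹) • x)‖) *
        (ε ^ (-(d : ℤ)) * ε⁻¹ ^ k) := by ring
    _ ≤ (2 ^ k * schwartzSup (Fin d → ℝ) k ρ) * (ε ^ (-(d : ℤ)) * ε⁻¹ ^ k) :=
        mul_le_mul_of_nonneg_right (weight_mul_le_schwartzSup le_rfl hb ρ _) (by positivity)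
    _ = _ := by
        rw [Nat.cast_add, neg_add, zpow_add₀ hε0.ne', zpow_neg ε (k : ℤ), zpow_natCast, inv_pow]

/-- The functional `h ↦ Λ h γ`. -/
noncomputable def evalRight {E F : Type*} [NormedAddCommGroup E] [NormedSpace ℝ E]
    [NormedAddCommGroup F] [NormedSpace ℝ F] (Λ : 𝓢(F, ℂ) →L[ℂ] (𝓢(E, ℂ) →L[ℂ] ℂ))
    (γ : 𝓢(E, ℂ)) : 𝓢(F, ℂ) →L[ℂ] ℂ where
  toFun h := Λ h γ
  map_add' _ _ := by simp
  map_smul' _ _ := by simp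
  cont := (continuous_eval_const γ).comp Λ.continuous

theorem rpow_pow_le_pow {ε s : ℝ} (hε0 : 0 < ε) (hε1 : ε ≤ 1) (hs : 0 < s) {p p' : ℕ}
    (hp : p / s ≤ p') : (ε ^ s) ^ p' ≤ ε ^ p := by
  rw [← Real.rpow_natCast, ← Real.rpow_mul hε0.le, ← Real.rpow_natCast ε p]
  exact Real.rpow_le_rpow_of_exponent_ge hε0 hε1 ((div_le_iff₀' hs).1 hp)

end Net

end SchwartzKernel

/-- the kernel net associated to a continuous linear map
`Λ : 𝓢(ℝ^n) → 𝓢'(ℝ^m)` belongs to `E_τ(ℝ^{m+n})` and represents `Λ` in the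
generalized distribution sense. -/
theorem stmt19 (m n : ℕ) (hm : 1 ≤ m) (hn : 1 ≤ n)
    (Λ : SchwartzMap (Fin n → ℝ) ℂ →L[ℂ] (SchwartzMap (Fin m → ℝ) ℂ →L[ℂ] ℂ))
    (s : ℝ) (hs : s ∈ Set.Ioo (0:ℝ) 1)
    (φ : SchwartzMap (Fin m → ℝ) ℂ) (hφ : IsMollifier φ)
    (ψ : SchwartzMap (Fin n → ℝ) ℂ) (hψ : IsMollifier ψ)
    (Ψ : ℝ → (Fin n → ℝ) → SchwartzMap (Fin n → ℝ) ℂ)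
    (hΨ : ∀ ε ∈ Set.Ioc (0:ℝ) 1, ∀ y v, Ψ ε y v = scaled ⇑ψ ε (y - v))
    (Φ : ℝ → (Fin m → ℝ) → SchwartzMap (Fin m → ℝ) ℂ)
    (hΦ : ∀ t ∈ Set.Ioc (0:ℝ) 1, ∀ ξ w, Φ t ξ w = scaled ⇑φ t (ξ - w))
    (H : ℝ → ((Fin m → ℝ) × (Fin n → ℝ)) → ℂ)
    (hH : ∀ ε ∈ Set.Ioc (0:ℝ) 1, ∀ (x : Fin m → ℝ) (y : Fin n → ℝ),
      H ε (x, y) = ∫ u : Fin m → ℝ, Λ (Ψ ε y) (Φ (ε ^ s) (x - u)) * scaled ⇑φ ε u) :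
    IsEtauNet H ∧
    ∀ (f : SchwartzMap (Fin n → ℝ) ℂ) (g : SchwartzMap (Fin m → ℝ) ℂ) (p : ℕ),
      ∃ C > (0:ℝ), ∃ η > (0:ℝ), ∀ ε : ℝ, 0 < ε → ε ≤ η →
        ‖Λ f g - ∫ x : Fin m → ℝ, (∫ y : Fin n → ℝ, H ε (x, y) * f y) * g x‖
          ≤ C * ε ^ p := by
  have hpow : ∀ ε ∈ Set.Ioc (0 : ℝ) 1, ε ^ s ∈ Set.Ioc (0 : ℝ) 1 := fun ε hε =>
    ⟨Real.rpow_pos_of_pos hε.1 s, Real.rpow_le_one hε.1.le hε.2 hs.1.le⟩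
  have habs : ∀ t ∈ Set.Ioc (0 : ℝ) 1, |-t| ≤ 1 := fun t ht => by
    rw [abs_neg, abs_of_pos ht.1]; exact ht.2
  have hK : ∀ ε ∈ Set.Ioc (0 : ℝ) 1,
      H ε = translationKernel Λ (Ψ ε 0) (smear φ (-(ε ^ s)) (Φ ε 0)) := by
    intro ε hε
    ext ⟨x, y⟩
    rw [hH ε hε, integral_map_scaled_sub_mul (Λ (Ψ ε y)) φ (hpow ε hε).1 (hΦ _ (hpow ε hε))
      (hΦ ε hε), eq_compSubConstCLM_of_scaled (hΨ ε hε) y, translationKernel]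
  refine ⟨isEtauNet_of_eq_translationKernel Λ hK (fun k => ?_) (fun k => ?_), fun f g p => ?_⟩
  · obtain ⟨C, hC0, N, hC⟩ := exists_schwartzSup_scaled_le ψ k
    exact ⟨C, hC0, N, fun ε hε => hC ε hε _ (hΨ ε hε 0)⟩
  · obtain ⟨C, hC0, N, hC⟩ := exists_schwartzSup_scaled_le φ k
    have := schwartzMoment_nonneg φ k
    refine ⟨2 ^ k * schwartzMoment φ k * 2 ^ k * C, by positivity, N, fun ε hε => ?_⟩
    refine (schwartzSup_smear_le φ _ (habs _ (hpow ε hε)) k).trans ?_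
    rw [mul_assoc _ C]
    exact mul_le_mul_of_nonneg_left (hC ε hε _ (hΦ ε hε 0)) (by positivity)
  · have hint : ∀ ε ∈ Set.Ioc (0 : ℝ) 1, ∫ x, (∫ y, H ε (x, y) * f y) * g x =
        Λ (smear ψ (-ε) f) (smear φ (-(ε ^ s)) (smear φ (-ε) g)) := by
      intro ε hε
      have h1 : ∀ x, ∫ y, H ε (x, y) * f y =
          (Λ (smear ψ (-ε) f) ∘L smear φ (-(ε ^ s))) (Φ ε x) := by
        intro x
        have h2 := integral_map_scaled_mul (evalRight Λ (smear φ (-(ε ^ s)) (Φ ε x))) ψ f hε.1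
          (hΨ ε hε)
        refine Eq.trans ?_ h2
        refine integral_congr_ae (.of_forall fun y => ?_)
        simp only [hK ε hε, translationKernel, ← smear_compSubConstCLM,
          ← eq_compSubConstCLM_of_scaled (hΨ ε hε), ← eq_compSubConstCLM_of_scaled (hΦ ε hε)]
        rfl
      simp only [h1]
      exact integral_map_scaled_mul _ φ g hε.1 (hΦ ε hε)
    obtain ⟨k, C, hC0, hC⟩ := exists_joint_bound Λ
    obtain ⟨p', hp'⟩ := exists_nat_ge (p / s)
    obtain ⟨A, hA0, hA⟩ := exists_schwartzSup_smear_sub_le hψ f k p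
    obtain ⟨B, hB0, hB⟩ := exists_schwartzSup_smear_sub_le hφ g k p
    obtain ⟨D, hD0, hD⟩ := exists_schwartzSup_smear_sub_le hφ g k p'
    set a := 2 ^ k * schwartzMoment ψ k * 2 ^ k with ha
    set b := 2 ^ k * schwartzMoment φ k * 2 ^ k with hb
    have ha0 : 0 ≤ a := by have := schwartzMoment_nonneg ψ k; positivity
    have hb0 : 0 ≤ b := by have := schwartzMoment_nonneg φ k; positivity
    set qf := schwartzSup (Fin n → ℝ) k f
    set qg := schwartzSup (Fin m → ℝ) k g
    have hqf : 0 ≤ qf := by positivity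
    have hqg : 0 ≤ qg := by positivity
    refine ⟨C * A * qg + C * (a * qf) * (D + b * B) + 1, by positivity, 1, one_pos,
      fun ε hε0 hε1 => ?_⟩
    have hε : ε ∈ Set.Ioc (0 : ℝ) 1 := ⟨hε0, hε1⟩
    have habsε : |-ε| = ε := by rw [abs_neg, abs_of_pos hε0]
    have habst : |-(ε ^ s)| = ε ^ s := by rw [abs_neg, abs_of_pos (hpow ε hε).1]
    have e1 := hA (-ε) (habs ε hε)
    have e2 := hB (-ε) (habs ε hε)
    have e3 := hD (-(ε ^ s)) (habs _ (hpow ε hε))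
    have e4 := schwartzSup_smear_le ψ f (habs ε hε) k
    have e5 := schwartzSup_smear_le φ (smear φ (-ε) g - g) (habs _ (hpow ε hε)) k
    rw [habsε] at e1 e2
    rw [habst] at e3
    rw [hint ε hε]
    set f' := smear ψ (-ε) f
    set g₁ := smear φ (-ε) g
    set g' := smear φ (-(ε ^ s)) g₁ with hg'
    have e6 : schwartzSup (Fin m → ℝ) k (g' - g) ≤ (D + b * B) * ε ^ p := by
      have : g' - g = (smear φ (-(ε ^ s)) g - g) + smear φ (-(ε ^ s)) (g₁ - g) := by
        rw [hg', map_sub]; abel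
      rw [this]
      refine (map_add_le_add _ _ _).trans ?_
      rw [add_mul, mul_assoc b]
      exact add_le_add (e3.trans (mul_le_mul_of_nonneg_left
        (rpow_pow_le_pow hε0 hε1 hs.1 hp') hD0)) (e5.trans (mul_le_mul_of_nonneg_left e2 hb0))
    have hid : Λ f g - Λ f' g' = -(Λ (f' - f) g + Λ f' (g' - g)) := by
      simp only [map_sub, _root_.sub_apply]
      ring
    have i1 : ‖Λ (f' - f) g‖ ≤ C * (A * ε ^ p) * qg :=
      (hC _ _).trans (mul_le_mul_of_nonneg_right (mul_le_mul_of_nonneg_left e1 hC0) hqg)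
    have i2 : ‖Λ f' (g' - g)‖ ≤ C * (a * qf) * ((D + b * B) * ε ^ p) :=
      (hC _ _).trans (mul_le_mul (mul_le_mul_of_nonneg_left e4 hC0) e6 (by positivity)
        (by positivity))
    rw [hid, norm_neg]
    refine (norm_add_le _ _).trans ((add_le_add i1 i2).trans ?_)
    have : 0 < ε ^ p := by positivity
    nlinarith
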